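/- arXiv:1906.09778 — 2 statements merged into one kernel-verified Lean document; each statement's English description precedes it below -/
import Mathlib

section
/- Let Ω ⊂ ℝⁿ be a bounded open set of diameter d, let M_a be a weighted partial trace operator of class 𝒜, and let f be continuous and bounded on Ω. Then there is a constant C_n > 0 depending only on n such that every viscosity solution u ∈ C(Ω̄) of M_a(D²u) = f in Ω satisfies sup_Ω |u| ≤ sup_{∂Ω} |u| + (C_n / a*) · d · ‖f‖_{L^n(Ω)}. -/
open Set Metric MeasureTheory Filter

noncomputable section

/-- Euclidean `n`-space `ℝⁿ`. -/
abbrev En (n : ℕ) : Type := EuclideanSpace ℝ (Fin n)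

/-- The eigenvalues of a (symmetric) matrix, arranged in nondecreasing order. -/
noncomputable def sortedEig {n : ℕ} (X : Matrix (Fin n) (Fin n) ℝ) : Fin n → ℝ :=
  if hX : X.IsHermitian then fun i => hX.eigenvalues (Tuple.sort hX.eigenvalues i) else 0

/-- The weighted partial trace operator `M_a(X) = Σ a_i λ_i(X)`. -/
noncomputable def Ma {n : ℕ} (a : Fin n → ℝ) (X : Matrix (Fin n) (Fin n) ℝ) : ℝ :=
  ∑ i, a i * sortedEig X i

/-- The last index of `Fin n`. -/
def lastIdx (n : ℕ) [NeZero n] : Fin n :=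
  ⟨n - 1, Nat.sub_lt (Nat.pos_of_ne_zero (NeZero.ne n)) Nat.one_pos⟩

/-- The class 𝒜̄ : all weights nonnegative, some weight positive. -/
def ClassAbar {n : ℕ} (a : Fin n → ℝ) : Prop := (∀ i, 0 ≤ a i) ∧ ∃ i, 0 < a i

/-- The class 𝒜 : nonnegative weights with `a 1 > 0` and `a n > 0`. -/
def ClassA {n : ℕ} [NeZero n] (a : Fin n → ℝ) : Prop :=
  (∀ i, 0 ≤ a i) ∧ 0 < a 0 ∧ 0 < a (lastIdx n)

/-- The class 𝒜₁ : nonnegative weights with `a 1 > 0`. -/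
def ClassA1 {n : ℕ} [NeZero n] (a : Fin n → ℝ) : Prop := (∀ i, 0 ≤ a i) ∧ 0 < a 0

/-- The class 𝒜ₙ : nonnegative weights with `a n > 0`. -/
def ClassAn {n : ℕ} [NeZero n] (a : Fin n → ℝ) : Prop :=
  (∀ i, 0 ≤ a i) ∧ 0 < a (lastIdx n)

/-- `a* = min (a 1) (a n)`. -/
noncomputable def aStar {n : ℕ} [NeZero n] (a : Fin n → ℝ) : ℝ := min (a 0) (a (lastIdx n))

/-- `â_j = (a 1 + ⋯ + a n) - a j`. -/
noncomputable def hatA {n : ℕ} (a : Fin n → ℝ) (j : Fin n) : ℝ := (∑ i, a i) - a j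

/-- The Hessian matrix of `φ` at `x`. -/
noncomputable def hess {n : ℕ} (φ : En n → ℝ) (x : En n) : Matrix (Fin n) (Fin n) ℝ :=
  fun i j => iteratedFDeriv ℝ 2 φ x ![EuclideanSpace.single i 1, EuclideanSpace.single j 1]

/-- The Hessian matrix of `φ` at `x`, with derivatives taken within `Ω`. -/
noncomputable def hessOn {n : ℕ} (Ω : Set (En n)) (φ : En n → ℝ) (x : En n) :
    Matrix (Fin n) (Fin n) ℝ :=
  fun i j =>
    iteratedFDerivWithin ℝ 2 φ Ω x ![EuclideanSpace.single i 1, EuclideanSpace.single j 1]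

/-- `u` is a viscosity subsolution of `M_a(D²u) = f` in `Ω`. -/
def IsViscSubsol {n : ℕ} (a : Fin n → ℝ) (Ω : Set (En n)) (f u : En n → ℝ) : Prop :=
  ∀ x₀ ∈ Ω, ∀ φ : En n → ℝ, ContDiff ℝ 2 φ →
    IsLocalMaxOn (fun x => u x - φ x) Ω x₀ → f x₀ ≤ Ma a (hess φ x₀)

/-- `u` is a viscosity supersolution of `M_a(D²u) = f` in `Ω`. -/
def IsViscSupersol {n : ℕ} (a : Fin n → ℝ) (Ω : Set (En n)) (f u : En n → ℝ) : Prop :=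
  ∀ x₀ ∈ Ω, ∀ φ : En n → ℝ, ContDiff ℝ 2 φ →
    IsLocalMinOn (fun x => u x - φ x) Ω x₀ → Ma a (hess φ x₀) ≤ f x₀

/-- `u` is a (continuous) viscosity solution of `M_a(D²u) = f` in `Ω`. -/
def IsViscSolution {n : ℕ} (a : Fin n → ℝ) (Ω : Set (En n)) (f u : En n → ℝ) : Prop :=
  ContinuousOn u Ω ∧ IsViscSubsol a Ω f u ∧ IsViscSupersol a Ω f u

/-- The `L^p` norm of `f` on `D`. -/
noncomputable def lpNormOn {n : ℕ} (p : ℝ) (D : Set (En n)) (f : En n → ℝ) : ℝ :=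
  (∫ x in D, |f x| ^ p) ^ (1 / p)

/-- The sup norm of `f` on `D`. -/
noncomputable def supAbsOn {n : ℕ} (D : Set (En n)) (f : En n → ℝ) : ℝ :=
  sSup ((fun x => |f x|) '' D)

/-- The Hölder seminorm `[h]_{β,D}`. -/
noncomputable def holderSemi {n : ℕ} (β : ℝ) (D : Set (En n)) (h : En n → ℝ) : ℝ :=
  sSup {r | ∃ x ∈ D, ∃ y ∈ D, x ≠ y ∧ r = |h x - h y| / ‖x - y‖ ^ β}

/-- The Hölder norm `‖g‖_{C^β(D)} = sup_D |g| + [g]_{β,D}`. -/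
noncomputable def cBetaNorm {n : ℕ} (β : ℝ) (D : Set (En n)) (g : En n → ℝ) : ℝ :=
  supAbsOn D g + holderSemi β D g

/-- `g` is `β`-Hölder continuous on `D`. -/
def HolderOn {n : ℕ} (β : ℝ) (D : Set (En n)) (g : En n → ℝ) : Prop :=
  ∃ K : ℝ, ∀ x ∈ D, ∀ y ∈ D, |g x - g y| ≤ K * ‖x - y‖ ^ β

/-- The `C^{1,β}(D)` norm: `sup|g| + sup|Dg| + [Dg]_{β,D}`. -/
noncomputable def c1BetaNorm {n : ℕ} (β : ℝ) (D : Set (En n)) (g : En n → ℝ) : ℝ :=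
  supAbsOn D g + sSup ((fun x => ‖fderiv ℝ g x‖) '' D) +
    sSup {r | ∃ x ∈ D, ∃ y ∈ D, x ≠ y ∧ r = ‖fderiv ℝ g x - fderiv ℝ g y‖ / ‖x - y‖ ^ β}

/-- `g ∈ C^{1,β}(D)`: differentiable with `β`-Hölder derivative on `D`. -/
def C1HolderOn {n : ℕ} (β : ℝ) (D : Set (En n)) (g : En n → ℝ) : Prop :=
  ContDiff ℝ 1 g ∧ ∃ K : ℝ, ∀ x ∈ D, ∀ y ∈ D,
    ‖fderiv ℝ g x - fderiv ℝ g y‖ ≤ K * ‖x - y‖ ^ β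

/-- Uniform exterior sphere condition with radius `R`: every boundary point lies on the
boundary of a closed ball of radius `R` containing `Ω̄`. -/
def ExtSphere {n : ℕ} (Ω : Set (En n)) (R : ℝ) : Prop :=
  ∀ y ∈ frontier Ω, ∃ z : En n, dist y z = R ∧ closure Ω ⊆ closedBall z R

/-- The cone `Σ_θ = {x : xₙ ≥ |x| cos θ}`. -/
def coneSet (n : ℕ) [NeZero n] (θ : ℝ) : Set (En n) := {x | ‖x‖ * Real.cos θ ≤ x (lastIdx n)}

/-- Uniform exterior cone condition. -/
def ExtCone {n : ℕ} [NeZero n] (Ω : Set (En n)) : Prop :=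
  ∃ θ₀ ∈ Set.Ioo (0 : ℝ) Real.pi, ∃ r₀ > (0 : ℝ), ∀ y ∈ frontier Ω,
    ∃ O : En n ≃ₗᵢ[ℝ] En n,
      closure Ω ∩ ball y r₀ ⊆ (fun x => y + O x) '' coneSet n θ₀

/-- Uniform Lipschitz boundary with Lipschitz constant `L`: near each boundary point, in
suitable rotated coordinates, `Ω` is the region above the graph of an `L`-Lipschitz
function. -/
def LipschitzBoundary {n : ℕ} [NeZero n] (Ω : Set (En n)) (L : ℝ) : Prop :=
  ∃ r₀ > (0 : ℝ), ∀ y ∈ frontier Ω, ∃ O : En n ≃ₗᵢ[ℝ] En n, ∃ ψ : En n → ℝ,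
    LipschitzWith (Real.toNNReal L) ψ ∧
    ∀ x ∈ ball (0 : En n) r₀,
      (y + O x ∈ Ω ↔ ψ (x - EuclideanSpace.single (lastIdx n) (x (lastIdx n))) < x (lastIdx n))

/-- The open cube of edge `ℓ` centered at the origin. -/
def cube (n : ℕ) (ℓ : ℝ) : Set (En n) := {x | ∀ i, |x i| < ℓ / 2}

/-- The upper concave envelope of `u` in `Ω`: the smallest concave function `≥ u` in `Ω`. -/
noncomputable def upperEnvelope {n : ℕ} (Ω : Set (En n)) (u : En n → ℝ) : En n → ℝ :=
  fun x => sInf {t | ∃ φ : En n → ℝ, ConcaveOn ℝ Ω φ ∧ (∀ z ∈ Ω, u z ≤ φ z) ∧ t = φ x}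

/-- The lower convex envelope of `u` in `Ω`: the largest convex function `≤ u` in `Ω`. -/
noncomputable def lowerEnvelope {n : ℕ} (Ω : Set (En n)) (u : En n → ℝ) : En n → ℝ :=
  fun x => sSup {t | ∃ φ : En n → ℝ, ConvexOn ℝ Ω φ ∧ (∀ z ∈ Ω, φ z ≤ u z) ∧ t = φ x}

end

/-!
Let `m` bound `|u|` on `∂Ω` and let `p` be a slope with `|p| diam Ω < -u x - m`. The minimum of
`z ↦ u z - ⟪p, z⟫` over the closure of `Ω` is then attained inside `Ω`, so the slopes of the affine
functions touching `u` from below inside `Ω` cover the ball of radius `(-u x - m) / diam Ω`.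

Wherever such slopes exist they form a locally Lipschitz function of the contact point, with
constant about `16 |f| / a*`. If slopes `p` at `x` and `q` at `y` differ by `4 L β e`, where `e` is
a unit vector and `L` is slightly more than `2 |y - x|`, then `u` lies above its tangent plane at
`x` by at least `2 β L²` on the plane `⟪e, z - x⟫ = L`. On the slab `|⟪e, z - x⟫| ≤ L`, cut off by a
ball of radius much larger than `L`, the difference is therefore touched from below by a paraboloid
of Hessian `β e ⊗ e - γ I` with `γ` small compared to `β`. On this Hessian `M_a` is at least
`aₙ β - (∑ aᵢ) γ`, so the equation bounds `β`, hence `|q - p|`, without any regularity of `u`.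

The area inequality gives `|B₁| ((-u x - m) / diam Ω)ⁿ ≤ ∫ (16 |f| / a*)ⁿ`. The bound from above is
the same argument for `-u`, with `a₁` in place of `aₙ`.
-/

section

open Module
open scoped RealInnerProductSpace NNReal ENNReal Topology

section AreaInequality

theorem outerMeasure_le_lintegral_of_locally {X : Type*} [TopologicalSpace X]
    [SecondCountableTopology X] [MeasurableSpace X] [OpensMeasurableSpace X] {μ : Measure X}
    {ν : OuterMeasure X} {h : X → ℝ≥0∞} {Ω : Set X} (hΩ : MeasurableSet Ω)
    (hloc : ∀ x ∈ Ω, ∃ U ∈ 𝓝[Ω] x, ∀ S ⊆ U ∩ Ω, MeasurableSet S → ν S ≤ ∫⁻ x in S, h x ∂μ) :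
    ν Ω ≤ ∫⁻ x in Ω, h x ∂μ := by
  rcases Ω.eq_empty_or_nonempty with rfl | hne
  · simp
  have hopen : ∀ x ∈ Ω, ∃ V, IsOpen V ∧ x ∈ V ∧
      ∀ S ⊆ V ∩ Ω, MeasurableSet S → ν S ≤ ∫⁻ x in S, h x ∂μ := by
    intro x hx
    obtain ⟨U, hU, hUν⟩ := hloc x hx
    obtain ⟨V, hV, hxV, hVU⟩ := mem_nhdsWithin.mp hU
    exact ⟨V, hV, hxV, fun S hS ↦ hUν S fun y hy ↦ ⟨hVU (hS hy), (hS hy).2⟩⟩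
  choose! V hVo hxV hVν using hopen
  obtain ⟨t, htΩ, htc, hcov⟩ := TopologicalSpace.countable_cover_nhdsWithin
    fun x hx ↦ mem_nhdsWithin_of_mem_nhds ((hVo x hx).mem_nhds (hxV x hx))
  have ht : t.Nonempty := by
    obtain ⟨y, hy⟩ := hne
    obtain ⟨x, hx, -⟩ := mem_iUnion₂.mp (hcov hy)
    exact ⟨x, hx⟩
  obtain ⟨s, rfl⟩ := htc.exists_eq_range ht
  have hsΩ (k : ℕ) : s k ∈ Ω := htΩ (mem_range_self k)
  set D : ℕ → Set X := disjointed fun k ↦ V (s k) ∩ Ω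
  have hDm (k : ℕ) : MeasurableSet (D k) :=
    .disjointed (fun k ↦ (hVo _ (hsΩ k)).measurableSet.inter hΩ) k
  have hDΩ : ⋃ k, D k = Ω := by
    rw [iUnion_disjointed, ← iUnion_inter, inter_eq_right]
    simpa only [biUnion_range] using hcov
  calc ν Ω = ν (⋃ k, D k) := by rw [hDΩ]
    _ ≤ ∑' k, ν (D k) := measure_iUnion_le _
    _ ≤ ∑' k, ∫⁻ x in D k, h x ∂μ :=
        ENNReal.tsum_le_tsum fun k ↦ hVν _ (hsΩ k) _ (disjointed_subset _ k) (hDm k)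
    _ = ∫⁻ x in Ω, h x ∂μ := by rw [← lintegral_iUnion hDm (disjoint_disjointed _), hDΩ]

theorem eLpNorm_natCast_pow_eq_lintegral {α : Type*} [MeasurableSpace α] {ρ : Measure α} {n : ℕ}
    (hn : n ≠ 0) (h : α → ℝ≥0∞) : eLpNorm h n ρ ^ n = ∫⁻ x, h x ^ n ∂ρ := by
  simpa using eLpNorm_nnreal_pow_eq_lintegral (μ := ρ) (f := h) (p := n) (Nat.cast_ne_zero.mpr hn)

theorem eLpNorm_add_const_le {α : Type*} [MeasurableSpace α] {ρ : Measure α} {p : ℝ≥0∞}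
    (hp : 1 ≤ p) (hp' : p ≠ ∞) {h : α → ℝ≥0∞} (hh : AEStronglyMeasurable h ρ) (c : ℝ≥0∞) :
    eLpNorm (fun x ↦ h x + c) p ρ ≤ eLpNorm h p ρ + c * ρ univ ^ (1 / p.toReal) :=
  (eLpNorm_add_le (g := fun _ ↦ c) hh aestronglyMeasurable_const hp).trans_eq <| by
    rw [eLpNorm_const' c (one_pos.trans_le hp).ne' hp', enorm_eq_self]

variable {E : Type*} [NormedAddCommGroup E] [NormedSpace ℝ E] [FiniteDimensional ℝ E]
  [MeasurableSpace E] [BorelSpace E] (μ : Measure E) [μ.IsAddHaarMeasure]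

theorem addHaar_image_le_of_lipschitzOnWith {K : ℝ≥0} {g : E → E} {s : Set E}
    (hg : LipschitzOnWith K g s) : μ (g '' s) ≤ (K : ℝ≥0∞) ^ finrank ℝ E * μ s := by
  have h := hg.hausdorffMeasure_image_le (d := finrank ℝ E) (Nat.cast_nonneg _)
  rw [ENNReal.rpow_natCast] at h
  rw [Measure.isAddLeftInvariant_eq_smul μ (Measure.hausdorffMeasure (finrank ℝ E))]
  simp only [Measure.smul_apply, ENNReal.smul_def, smul_eq_mul]
  rw [mul_left_comm]
  gcongr

variable {A Ω : Set E} {g : E → E} {κ : E → ℝ≥0}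

theorem addHaar_image_le_lintegral_of_locally_lipschitz (hΩ : MeasurableSet Ω) (hA : A ⊆ Ω)
    (hκ : ContinuousOn κ Ω)
    (hg : ∀ x ∈ Ω, ∀ K > κ x, ∃ U ∈ 𝓝[Ω] x, LipschitzOnWith K g (A ∩ U)) {ε : ℝ≥0} (hε : 0 < ε) :
    μ (g '' A) ≤ ∫⁻ x in Ω, (κ x + ε : ℝ≥0) ^ finrank ℝ E ∂μ := by
  -- `A` need not be measurable, so `S ↦ μ (g '' (S ∩ A))` is only an outer measure.
  let ν : OuterMeasure E := (OuterMeasure.comap g μ.toOuterMeasure).restrict A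
  have hν (S : Set E) : ν S = μ (g '' (S ∩ A)) := OuterMeasure.restrict_apply ..
  suffices ν Ω ≤ ∫⁻ x in Ω, (κ x + ε : ℝ≥0) ^ finrank ℝ E ∂μ by
    rwa [hν, inter_eq_right.mpr hA] at this
  refine outerMeasure_le_lintegral_of_locally hΩ fun x₀ hx₀ ↦ ?_
  obtain ⟨U, hU, hgU⟩ := hg x₀ hx₀ (κ x₀ + ε / 2) (lt_add_of_pos_right _ (half_pos hε))
  have hκU : ∀ᶠ x in 𝓝[Ω] x₀, κ x₀ < κ x + ε / 2 :=
    ((hκ x₀ hx₀).add_const (ε / 2)).eventually_const_lt (lt_add_of_pos_right _ (half_pos hε))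
  refine ⟨_, inter_mem hU hκU, fun S hS hSm ↦ ?_⟩
  have hκS (x : E) (hx : x ∈ S) : κ x₀ + ε / 2 ≤ κ x + ε := by
    calc κ x₀ + ε / 2 ≤ κ x + ε / 2 + ε / 2 := by gcongr; exact (hS hx).1.2.le
      _ = κ x + ε := by rw [add_assoc, add_halves]
  have hgS : LipschitzOnWith (κ x₀ + ε / 2) g (S ∩ A) :=
    hgU.mono fun x hx ↦ ⟨hx.2, (hS hx.1).1.1⟩
  calc ν S = μ (g '' (S ∩ A)) := hν S
    _ ≤ (κ x₀ + ε / 2 : ℝ≥0) ^ finrank ℝ E * μ (S ∩ A) :=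
        addHaar_image_le_of_lipschitzOnWith μ hgS
    _ ≤ (κ x₀ + ε / 2 : ℝ≥0) ^ finrank ℝ E * μ S := by gcongr; exact inter_subset_left
    _ = ∫⁻ _ in S, (κ x₀ + ε / 2 : ℝ≥0) ^ finrank ℝ E ∂μ := (setLIntegral_const ..).symm
    _ ≤ ∫⁻ x in S, (κ x + ε : ℝ≥0) ^ finrank ℝ E ∂μ :=
        setLIntegral_mono' hSm fun x hx ↦
          pow_le_pow_left' (ENNReal.coe_le_coe.mpr (hκS x hx)) _

theorem addHaar_image_le_eLpNorm_pow_of_locally_lipschitz [Nontrivial E] (hΩ : MeasurableSet Ω)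
    (hμΩ : μ Ω ≠ ∞) (hA : A ⊆ Ω) (hκ : ContinuousOn κ Ω)
    (hg : ∀ x ∈ Ω, ∀ K > κ x, ∃ U ∈ 𝓝[Ω] x, LipschitzOnWith K g (A ∩ U)) :
    μ (g '' A) ≤ eLpNorm (fun x ↦ (κ x : ℝ≥0∞)) (finrank ℝ E) (μ.restrict Ω) ^ finrank ℝ E := by
  set n := finrank ℝ E
  have hn0 : 0 < n := finrank_pos
  have hκm : AEStronglyMeasurable (fun x ↦ (κ x : ℝ≥0∞)) (μ.restrict Ω) :=
    (ENNReal.continuous_coe.comp_continuousOn hκ).aestronglyMeasurable hΩ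
  set I := eLpNorm (fun x ↦ (κ x : ℝ≥0∞)) n (μ.restrict Ω)
  set c := μ Ω ^ (1 / (n : ℝ)) with hc
  have hε (ε : ℝ≥0) (hε : ε ∈ Ioi 0) : μ (g '' A) ≤ (I + ε * c) ^ n := by
    calc μ (g '' A) ≤ ∫⁻ x in Ω, (κ x + ε : ℝ≥0) ^ n ∂μ :=
          addHaar_image_le_lintegral_of_locally_lipschitz μ hΩ hA hκ hg hε
      _ = eLpNorm (fun x ↦ κ x + (ε : ℝ≥0∞)) n (μ.restrict Ω) ^ n := by
          simp only [ENNReal.coe_add, eLpNorm_natCast_pow_eq_lintegral hn0.ne']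
      _ ≤ (I + ε * c) ^ n := by
          gcongr
          simpa [hc] using eLpNorm_add_const_le (Nat.one_le_cast.mpr hn0)
            (ENNReal.natCast_ne_top n) hκm ε
  have hlim : Tendsto (fun ε : ℝ≥0 ↦ (I + ε * c) ^ n) (𝓝[>] 0) (𝓝 (I ^ n)) := by
    have hc : c ≠ ∞ := ENNReal.rpow_ne_top_of_nonneg (by positivity) hμΩ
    have hcont : Continuous fun ε : ℝ≥0 ↦ (ε * c : ℝ≥0∞) :=
      (ENNReal.continuous_mul_const hc).comp ENNReal.continuous_coe
    have hcont' := (ENNReal.continuous_pow n).comp (hcont.const_add I)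
    simpa [Function.comp_def] using (hcont'.tendsto 0).mono_left nhdsWithin_le_nhds
  exact ge_of_tendsto hlim (eventually_mem_nhdsWithin.mono hε)

end AreaInequality

section Subdifferential

variable {E : Type*} [NormedAddCommGroup E] [InnerProductSpace ℝ E]
  {Ω : Set E} {v : E → ℝ} {x y p q : E}

/-- The subdifferential of `v` at `x` relative to `Ω`: the slopes of the affine functions that
touch `v` at `x` and lie below `v` on all of `Ω`. -/
def subdiffOn (Ω : Set E) (v : E → ℝ) (x : E) : Set E :=
  {p | ∀ z ∈ Ω, v x + ⟪p, z - x⟫ ≤ v z}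

theorem add_inner_add_inner_le_of_mem_subdiffOn (hp : p ∈ subdiffOn Ω v x)
    (hq : q ∈ subdiffOn Ω v y) (hy : y ∈ Ω) {z : E} (hz : z ∈ Ω) :
    v x + ⟪p, z - x⟫ + ⟪q - p, z - y⟫ ≤ v z := by
  have hxy := hp y hy
  have hyz := hq z hz
  have hsplit : ⟪p, z - x⟫ = ⟪p, z - y⟫ + ⟪p, y - x⟫ := by
    rw [← inner_add_right, sub_add_sub_cancel]
  rw [inner_sub_left]
  linarith

theorem norm_mul_le_sub_of_mem_subdiffOn (hp : p ∈ subdiffOn Ω v x) (hq : q ∈ subdiffOn Ω v y)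
    (hy : y ∈ Ω) {z e : E} (hz : z ∈ Ω) (he : ‖e‖ = 1) (hqp : q - p = ‖q - p‖ • e) {L : ℝ}
    (hyx : 2 * ‖y - x‖ ≤ L) (hzx : L ≤ ⟪e, z - x⟫) :
    ‖q - p‖ * (L / 2) ≤ v z - v x - ⟪p, z - x⟫ := by
  have hyL : ⟪e, y - x⟫ ≤ ‖y - x‖ := by simpa [he] using real_inner_le_norm e (y - x)
  have hzy : L / 2 ≤ ⟪e, z - y⟫ := by
    rw [← sub_sub_sub_cancel_right z y x, inner_sub_right]
    linarith
  calc ‖q - p‖ * (L / 2) ≤ ‖q - p‖ * ⟪e, z - y⟫ := by gcongr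
    _ = ⟪q - p, z - y⟫ := by rw [← real_inner_smul_left, ← hqp]
    _ ≤ v z - v x - ⟪p, z - x⟫ := by
      linarith [add_inner_add_inner_le_of_mem_subdiffOn hp hq hy hz]

theorem ball_subset_iUnion_subdiffOn [ProperSpace E] (hΩ : IsOpen Ω)
    (hΩb : Bornology.IsBounded Ω) (hv : ContinuousOn v (closure Ω)) {m : ℝ}
    (hm : ∀ z ∈ frontier Ω, -m ≤ v z) (hx : x ∈ Ω) {r : ℝ} (hr : r * diam Ω ≤ -v x - m) :
    ball 0 r ⊆ ⋃ z ∈ Ω, subdiffOn Ω v z := by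
  intro p hp
  rw [mem_ball_zero_iff] at hp
  have hcont : ContinuousOn (fun z ↦ v z - ⟪p, z - x⟫) (closure Ω) := hv.sub (by fun_prop)
  obtain ⟨z₀, hz₀, hmin⟩ :=
    hΩb.isCompact_closure.exists_isMinOn ⟨x, subset_closure hx⟩ hcont
  have hz₀Ω : z₀ ∈ Ω := by
    by_contra hz₀Ω
    have hne : 0 < ‖z₀ - x‖ := norm_sub_pos_iff.mpr fun h ↦ hz₀Ω (h ▸ hx)
    have hdiam : ‖z₀ - x‖ ≤ diam Ω := by
      rw [← dist_eq_norm, ← diam_closure]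
      exact dist_le_diam_of_mem hΩb.closure hz₀ (subset_closure hx)
    have hinner : ⟪p, z₀ - x⟫ < -v x - m := by
      calc ⟪p, z₀ - x⟫ ≤ ‖p‖ * ‖z₀ - x‖ := real_inner_le_norm _ _
        _ < r * ‖z₀ - x‖ := by gcongr
        _ ≤ r * diam Ω := by have := (norm_nonneg p).trans hp.le; gcongr
        _ ≤ -v x - m := hr
    have hzx : v z₀ - ⟪p, z₀ - x⟫ ≤ v x - ⟪p, x - x⟫ := hmin (subset_closure hx)
    rw [sub_self, inner_zero_right] at hzx
    linarith [hm z₀ (hΩ.frontier_eq ▸ ⟨hz₀, hz₀Ω⟩)]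
  refine mem_iUnion₂.mpr ⟨z₀, hz₀Ω, fun z hz ↦ ?_⟩
  have hzz₀ : v z₀ - ⟪p, z₀ - x⟫ ≤ v z - ⟪p, z - x⟫ := hmin (subset_closure hz)
  have hsplit : ⟪p, z - z₀⟫ = ⟪p, z - x⟫ - ⟪p, z₀ - x⟫ := by
    rw [← inner_sub_right, sub_sub_sub_cancel_right]
  linarith

end Subdifferential

section Paraboloids

variable {E : Type*} [NormedAddCommGroup E] [InnerProductSpace ℝ E]

/-- The quadratic test functions `z ↦ β/2 ⟪e, z⟫² - γ/2 ‖z‖² + ⟪q, z⟫`, with Hessian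
`β e ⊗ e - γ I`. -/
noncomputable def paraboloid (β γ : ℝ) (e q z : E) : ℝ :=
  β / 2 * ⟪e, z⟫ ^ 2 - γ / 2 * ‖z‖ ^ 2 + ⟪q, z⟫

theorem neg_paraboloid (β γ : ℝ) (e q z : E) :
    -paraboloid β γ e q z = paraboloid (-β) (-γ) e (-q) z := by
  simp only [paraboloid, inner_neg_left]
  ring

theorem exists_eq_paraboloid_add_const (β γ L : ℝ) (e p x : E) : ∃ q : E, ∃ c : ℝ, ∀ z,
    β / 2 * (⟪e, z - x⟫ + L) ^ 2 - γ / 2 * ‖z - x‖ ^ 2 + ⟪p, z - x⟫ =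
      paraboloid β γ e q z + c := by
  refine ⟨(β * (L - ⟪e, x⟫)) • e + γ • x + p,
    β / 2 * (L - ⟪e, x⟫) ^ 2 - γ / 2 * ‖x‖ ^ 2 - ⟪p, x⟫, fun z ↦ ?_⟩
  simp only [paraboloid, inner_sub_right, norm_sub_sq_real, inner_add_left,
    real_inner_smul_left, real_inner_comm x z]
  ring

theorem contDiff_paraboloid (β γ : ℝ) (e q : E) {k : WithTop ℕ∞} :
    ContDiff ℝ k (paraboloid β γ e q) :=
  ((contDiff_const.mul ((contDiff_const.inner ℝ contDiff_id).pow 2)).sub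
    (contDiff_const.mul (contDiff_norm_sq ℝ))).add (contDiff_const.inner ℝ contDiff_id)

theorem fderiv_paraboloid (β γ : ℝ) (e q : E) :
    fderiv ℝ (paraboloid β γ e q) = fun z ↦ innerSL ℝ ((β * ⟪e, z⟫) • e - γ • z + q) := by
  funext z
  have hinner (w : E) : HasFDerivAt (fun z ↦ ⟪w, z⟫) (innerSL ℝ w) z := (innerSL ℝ w).hasFDerivAt
  have hnorm : HasFDerivAt (fun z : E ↦ ‖z‖ ^ 2) (2 • innerSL ℝ z) z :=
    (hasStrictFDerivAt_norm_sq z).hasFDerivAt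
  refine (((((hinner e).pow 2).const_mul (β / 2)).sub (hnorm.const_mul (γ / 2))).add
    (hinner q)).fderiv.trans ?_
  ext w
  simp
  ring

theorem iteratedFDeriv_two_paraboloid (β γ : ℝ) (e q z : E) (m : Fin 2 → E) :
    iteratedFDeriv ℝ 2 (paraboloid β γ e q) z m =
      β * (⟪e, m 0⟫ * ⟪e, m 1⟫) - γ * ⟪m 0, m 1⟫ := by
  have hgrad : HasFDerivAt (fun z ↦ (β * ⟪e, z⟫) • e - γ • z + q)
      ((β • innerSL ℝ e).smulRight e - γ • ContinuousLinearMap.id ℝ E) z :=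
    (((β • innerSL ℝ e).smulRight e).hasFDerivAt.sub
      ((hasFDerivAt_id z).const_smul γ)).add_const q
  have hfderiv : HasFDerivAt (fun z ↦ innerSL ℝ ((β * ⟪e, z⟫) • e - γ • z + q)) _ z :=
    (innerSL ℝ (E := E)).hasFDerivAt.comp z hgrad
  rw [iteratedFDeriv_two_apply, fderiv_paraboloid, hfderiv.fderiv]
  change ⟪(β * ⟪e, m 0⟫) • e - γ • m 0, m 1⟫ = _
  rw [inner_sub_left, real_inner_smul_left, real_inner_smul_left, mul_assoc]

end Paraboloids

section ParaboloidSupersolutions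

variable {E : Type*} [NormedAddCommGroup E] [InnerProductSpace ℝ E]

/-- A viscosity supersolution in a weak sense: the tests are only the paraboloids of Hessian
`β e ⊗ e - γ I`, where `e` is a unit vector and `β ≥ 0`, and all that is retained of the operator is
that its value on this Hessian is at least `β - Λ γ`. -/
def IsParaboloidSupersol (Λ : ℝ) (Ω : Set E) (F v : E → ℝ) : Prop :=
  ∀ x₀ ∈ Ω, ∀ β γ : ℝ, 0 ≤ β → ∀ e q : E, ‖e‖ = 1 →
    IsLocalMin (fun z ↦ v z - paraboloid β γ e q z) x₀ → β - Λ * γ ≤ F x₀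

variable {Λ : ℝ} {Ω : Set E} {F v : E → ℝ}

theorem isParaboloidSupersol_inv_smul {α σ : ℝ} (hα : 0 < α)
    (h : ∀ x₀ ∈ Ω, ∀ β γ : ℝ, 0 ≤ β → ∀ e q : E, ‖e‖ = 1 →
      IsLocalMin (fun z ↦ v z - paraboloid β γ e q z) x₀ → α * β - σ * γ ≤ F x₀) :
    IsParaboloidSupersol (σ / α) Ω (α⁻¹ • F) v := by
  intro x₀ hx₀ β γ hβ e q he hmin
  calc β - σ / α * γ = α⁻¹ * (α * β - σ * γ) := by field_simp
    _ ≤ α⁻¹ * F x₀ := by gcongr; exact h x₀ hx₀ β γ hβ e q he hmin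

theorem IsParaboloidSupersol.le_of_isLocalMin (h : IsParaboloidSupersol Λ Ω F v) {z₀ : E}
    (hz₀ : z₀ ∈ Ω) {β γ L : ℝ} (hβ : 0 ≤ β) {e : E} (he : ‖e‖ = 1) {x p : E}
    (hmin : IsLocalMin (fun z ↦ v z - v x - ⟪p, z - x⟫ -
      (β / 2 * (⟪e, z - x⟫ + L) ^ 2 - γ / 2 * ‖z - x‖ ^ 2)) z₀) :
    β - Λ * γ ≤ F z₀ := by
  obtain ⟨q, c, hqc⟩ := exists_eq_paraboloid_add_const β γ L e p x
  refine h z₀ hz₀ β γ hβ e q he ?_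
  have hshift : (fun z ↦ v z - paraboloid β γ e q z) = fun z ↦ v z - v x - ⟪p, z - x⟫ -
      (β / 2 * (⟪e, z - x⟫ + L) ^ 2 - γ / 2 * ‖z - x‖ ^ 2) + (v x + c) :=
    funext fun z ↦ by linarith [hqc z]
  rw [hshift]
  exact hmin.add isLocalMin_const

theorem quadratic_le_of_slab_boundary {β γ R L τ ρ W : ℝ} (hβ : 0 ≤ β)
    (hγ : 4 * β * L ^ 2 ≤ γ * R ^ 2) (hγ0 : 0 ≤ γ) (hτ : |τ| ≤ L) (hW : 0 ≤ W)
    (hbdry : ρ = R ∨ |τ| = L) (hface : τ = L → 2 * β * L ^ 2 ≤ W) :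
    β / 2 * (τ + L) ^ 2 - γ / 2 * ρ ^ 2 ≤ W := by
  have hγρ : 0 ≤ γ / 2 * ρ ^ 2 := by positivity
  obtain ⟨hτ₁, hτ₂⟩ := abs_le.mp hτ
  have hquad : β / 2 * (τ + L) ^ 2 ≤ 2 * β * L ^ 2 := by
    calc β / 2 * (τ + L) ^ 2 ≤ β / 2 * (L + L) ^ 2 := by gcongr; linarith
      _ = 2 * β * L ^ 2 := by ring
  rcases hbdry with rfl | hτL
  · linarith
  · rcases eq_or_eq_neg_of_abs_eq hτL with h | h
    · linarith [hface h]
    · rw [h, neg_add_cancel]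
      linarith

variable [ProperSpace E]

theorem exists_isLocalMin_of_le_on_slab {w : E → ℝ} {e x : E} {β γ R L : ℝ} (hβ : 0 < β)
    (hR : 0 < R) (hL : 0 < L) (hγ : 4 * β * L ^ 2 ≤ γ * R ^ 2)
    (hw : ContinuousOn w (closedBall x R)) (hwx : w x = 0)
    (hw_nonneg : ∀ z ∈ closedBall x R, 0 ≤ w z)
    (hw_face : ∀ z ∈ closedBall x R, ⟪e, z - x⟫ = L → 2 * β * L ^ 2 ≤ w z) :
    ∃ z ∈ ball x R, IsLocalMin
      (fun z ↦ w z - (β / 2 * (⟪e, z - x⟫ + L) ^ 2 - γ / 2 * ‖z - x‖ ^ 2)) z := by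
  set g : E → ℝ := fun z ↦ w z - (β / 2 * (⟪e, z - x⟫ + L) ^ 2 - γ / 2 * ‖z - x‖ ^ 2) with hg
  have hτ : Continuous fun z : E ↦ |⟪e, z - x⟫| := by fun_prop
  set U : Set E := ball x R ∩ {z | |⟪e, z - x⟫| < L}
  set D : Set E := closedBall x R ∩ {z | |⟪e, z - x⟫| ≤ L}
  have hUD : U ⊆ D :=
    inter_subset_inter ball_subset_closedBall (ofPred_subset_ofPred.mpr fun _ ↦ le_of_lt)
  have hU : IsOpen U := isOpen_ball.inter (isOpen_lt hτ continuous_const)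
  have hD : IsCompact D :=
    (isCompact_closedBall x R).inter_right (isClosed_le hτ continuous_const)
  have hxU : x ∈ U := ⟨mem_ball_self hR, by simpa using hL⟩
  have hgc : ContinuousOn g D := (hw.mono inter_subset_left).sub (by fun_prop)
  have hgx : g x < 0 := by
    have : 0 < β / 2 * L ^ 2 := by positivity
    simpa [hg, hwx] using this
  have hγ0 : 0 ≤ γ := by
    have : 0 ≤ 4 * β * L ^ 2 := by positivity
    exact nonneg_of_mul_nonneg_left (this.trans hγ) (by positivity)
  have hg_boundary (z : E) (hz : z ∈ D \ U) : g x < g z := by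
    refine hgx.trans_le (sub_nonneg.mpr ?_)
    obtain ⟨⟨hzR, hzL⟩, hzU⟩ := hz
    refine quadratic_le_of_slab_boundary hβ.le hγ hγ0 hzL (hw_nonneg z hzR) ?_ (hw_face z hzR)
    by_contra! hne
    exact hzU ⟨mem_ball_iff_norm.mpr ((mem_closedBall_iff_norm.mp hzR).lt_of_ne hne.1),
      lt_of_le_of_ne hzL hne.2⟩
  obtain ⟨z, hzU, hz⟩ := hD.exists_isLocalMin_mem_open hUD hgc (hUD hxU) hg_boundary hU
  exact ⟨z, hzU.1, hz⟩

theorem IsParaboloidSupersol.norm_sub_le_of_mem_subdiffOn (h : IsParaboloidSupersol Λ Ω F v)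
    (hv : ContinuousOn v Ω) {K L B : ℝ} (hK : 0 < K) (hKΛ : 8 * Λ ≤ K ^ 2) (hL : 0 < L)
    (hB : 0 ≤ B) {x y p q : E} (hΩ : closedBall x (K * L) ⊆ Ω)
    (hF : ∀ z ∈ closedBall x (K * L), F z ≤ B) (hy : y ∈ Ω) (hyx : 2 * ‖y - x‖ ≤ L)
    (hp : p ∈ subdiffOn Ω v x) (hq : q ∈ subdiffOn Ω v y) : ‖q - p‖ ≤ 8 * L * B := by
  rcases eq_or_ne (q - p) 0 with hqp | hqp
  · rw [hqp, norm_zero]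
    positivity
  have hqp0 : 0 < ‖q - p‖ := norm_pos_iff.mpr hqp
  obtain ⟨e, he, hqpe⟩ : ∃ e : E, ‖e‖ = 1 ∧ q - p = ‖q - p‖ • e :=
    ⟨‖q - p‖⁻¹ • (q - p), norm_smul_inv_norm hqp, (smul_inv_smul₀ hqp0.ne' _).symm⟩
  obtain ⟨β, hβ, hqpβ⟩ : ∃ β > 0, ‖q - p‖ = 4 * L * β :=
    ⟨‖q - p‖ / (4 * L), by positivity, by field_simp⟩
  have hface (z : E) (hz : z ∈ closedBall x (K * L)) (hzL : ⟪e, z - x⟫ = L) :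
      2 * β * L ^ 2 ≤ v z - v x - ⟪p, z - x⟫ := by
    calc 2 * β * L ^ 2 = ‖q - p‖ * (L / 2) := by rw [hqpβ]; ring
      _ ≤ v z - v x - ⟪p, z - x⟫ :=
        norm_mul_le_sub_of_mem_subdiffOn hp hq hy (hΩ hz) he hqpe hyx hzL.ge
  obtain ⟨z, hz, hmin⟩ := exists_isLocalMin_of_le_on_slab (γ := 4 * β / K ^ 2)
    (w := fun z ↦ v z - v x - ⟪p, z - x⟫) hβ (mul_pos hK hL) hL (by field_simp; rfl)
    (((hv.mono hΩ).sub continuousOn_const).sub (by fun_prop))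
    (by simp) (fun z hz ↦ by linarith [hp z (hΩ hz)]) hface
  have hzK := ball_subset_closedBall hz
  have htest : β - Λ * (4 * β / K ^ 2) ≤ B :=
    (h.le_of_isLocalMin (hΩ hzK) hβ.le he hmin).trans (hF z hzK)
  have hΛ : Λ * (4 * β / K ^ 2) ≤ β / 2 := by
    calc Λ * (4 * β / K ^ 2) = 8 * Λ * (β / 2) / K ^ 2 := by ring
      _ ≤ K ^ 2 * (β / 2) / K ^ 2 := by gcongr
      _ = β / 2 := by field_simp
  calc ‖q - p‖ = 4 * L * β := hqpβ
    _ ≤ 4 * L * (2 * B) := by gcongr; linarith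
    _ = 8 * L * B := by ring

theorem IsParaboloidSupersol.exists_mem_nhds_norm_sub_le (h : IsParaboloidSupersol Λ Ω F v)
    (hΩ : IsOpen Ω) (hv : ContinuousOn v Ω) (hF : ContinuousOn F Ω) {x₀ : E} (hx₀ : x₀ ∈ Ω)
    {B : ℝ} (hB : 0 ≤ B) (hFB : F x₀ < B) :
    ∃ U ∈ 𝓝 x₀, ∀ x ∈ U, ∀ y ∈ U, ∀ p ∈ subdiffOn Ω v x, ∀ q ∈ subdiffOn Ω v y,
      ‖q - p‖ ≤ 16 * B * ‖y - x‖ := by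
  obtain ⟨K, hK, hKΛ⟩ : ∃ K : ℝ, 0 < K ∧ 8 * Λ ≤ K ^ 2 :=
    ⟨8 * |Λ| + 1, by positivity, by nlinarith [le_abs_self Λ, abs_nonneg Λ]⟩
  have hnear : ∀ᶠ z in 𝓝 x₀, z ∈ Ω ∧ F z < B :=
    (hΩ.eventually_mem hx₀).and ((hF.continuousAt (hΩ.mem_nhds hx₀)).eventually_lt_const hFB)
  obtain ⟨ρ, hρ, hρF⟩ := Metric.eventually_nhds_iff_ball.mp hnear
  obtain ⟨δ, hδ, hδρ⟩ : ∃ δ > 0, δ + K * (5 * δ) = ρ :=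
    ⟨ρ / (1 + K * 5), by positivity, by field_simp⟩
  refine ⟨ball x₀ δ, ball_mem_nhds x₀ hδ, fun x hx y hy p hp q hq ↦ ?_⟩
  have hball {L : ℝ} (hL : L < 5 * δ) : closedBall x (K * L) ⊆ ball x₀ ρ := by
    refine closedBall_subset_ball' ?_
    calc K * L + dist x x₀ < K * (5 * δ) + δ := by gcongr; exact hx
      _ = ρ := by rw [add_comm, hδρ]
  have hδ_le : δ ≤ ρ := hδρ ▸ le_add_of_nonneg_right (by positivity)
  have hyΩ : y ∈ Ω := (hρF y (ball_subset_ball hδ_le hy)).1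
  have hyx : 2 * ‖y - x‖ < 5 * δ := by
    rw [← dist_eq_norm]
    linarith [dist_triangle_right y x x₀, mem_ball.mp hx, mem_ball.mp hy]
  have hL : ∀ᶠ L in 𝓝[>] (2 * ‖y - x‖), ‖q - p‖ ≤ 8 * L * B := by
    filter_upwards [Ioo_mem_nhdsGT hyx] with L hL
    exact h.norm_sub_le_of_mem_subdiffOn hv hK hKΛ (lt_of_le_of_lt (by positivity) hL.1) hB
      (fun z hz ↦ (hρF z (hball hL.2 hz)).1) (fun z hz ↦ (hρF z (hball hL.2 hz)).2.le)
      hyΩ hL.1.le hp hq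
  have hlim : Tendsto (fun L ↦ 8 * L * B) (𝓝[>] (2 * ‖y - x‖)) (𝓝 (8 * (2 * ‖y - x‖) * B)) :=
    tendsto_nhdsWithin_of_tendsto_nhds (Continuous.tendsto (by fun_prop) _)
  linarith [ge_of_tendsto hlim hL]

theorem IsParaboloidSupersol.exists_locally_lipschitz_selection
    (h : IsParaboloidSupersol Λ Ω F v) (hΩ : IsOpen Ω) (hv : ContinuousOn v Ω)
    (hF : ContinuousOn F Ω) :
    ∃ A ⊆ Ω, ∃ g : E → E, ⋃ x ∈ Ω, subdiffOn Ω v x ⊆ g '' A ∧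
      ∀ x₀ ∈ Ω, ∀ K > 16 * ‖F x₀‖₊, ∃ U ∈ 𝓝[Ω] x₀, LipschitzOnWith K g (A ∩ U) := by
  set A : Set E := {x ∈ Ω | (subdiffOn Ω v x).Nonempty}
  choose! g hg using fun x (hx : x ∈ A) ↦ hx.2
  have hlip {x₀ : E} (hx₀ : x₀ ∈ Ω) {B : ℝ≥0} (hB : ‖F x₀‖₊ < B) :=
    h.exists_mem_nhds_norm_sub_le hΩ hv hF hx₀ B.2 ((le_abs_self _).trans_lt hB)
  refine ⟨A, sep_subset _ _, g, iUnion₂_subset fun x hx p hp ↦ ?_, fun x₀ hx₀ K hK ↦ ?_⟩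
  · have hxA : x ∈ A := ⟨hx, p, hp⟩
    obtain ⟨U, hU, hUlip⟩ := hlip hx (lt_add_one ‖F x‖₊)
    have hxU := mem_of_mem_nhds hU
    exact ⟨x, hxA, by simpa [sub_eq_zero] using hUlip x hxU x hxU p hp (g x) (hg x hxA)⟩
  · have hFK : ‖F x₀‖₊ < K / 16 := by rwa [lt_div_iff₀' (by norm_num)]
    obtain ⟨U, hU, hUlip⟩ := hlip hx₀ hFK
    refine ⟨U, mem_nhdsWithin_of_mem_nhds hU, .of_dist_le_mul fun y hy x hx ↦ ?_⟩
    rw [dist_eq_norm, dist_eq_norm]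
    simpa [mul_div_cancel₀] using hUlip x hx.2 y hy.2 _ (hg x hx.1) _ (hg y hy.1)

end ParaboloidSupersolutions

section OneSidedEstimate

variable {E : Type*} [NormedAddCommGroup E] [InnerProductSpace ℝ E] [FiniteDimensional ℝ E]
  [Nontrivial E] [MeasurableSpace E] [BorelSpace E] (μ : Measure E) [μ.IsAddHaarMeasure]

theorem radius_le_of_addHaar_ball_le {r s : ℝ} (hr : 0 ≤ r) (hs : 0 ≤ s)
    (h : μ.real (ball 0 r) ≤ s ^ finrank ℝ E) :
    r ≤ s / μ.real (ball 0 1) ^ (1 / finrank ℝ E : ℝ) := by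
  have hω : 0 < μ.real (ball 0 1) :=
    ENNReal.toReal_pos (measure_ball_pos μ 0 one_pos).ne' measure_ball_lt_top.ne
  have hn : finrank ℝ E ≠ 0 := finrank_pos.ne'
  rw [le_div_iff₀ (by positivity), ← pow_le_pow_iff_left₀ (by positivity) hs hn, mul_pow, one_div,
    Real.rpow_inv_natCast_pow hω.le hn]
  simpa [Measure.real, Measure.addHaar_ball μ (0 : E) hr, hr] using h

variable {Λ : ℝ} {Ω : Set E} {F v : E → ℝ}

theorem IsParaboloidSupersol.addHaar_iUnion_subdiffOn_le (h : IsParaboloidSupersol Λ Ω F v)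
    (hΩ : IsOpen Ω) (hμΩ : μ Ω ≠ ∞) (hv : ContinuousOn v Ω) (hF : ContinuousOn F Ω) :
    μ (⋃ x ∈ Ω, subdiffOn Ω v x) ≤
      (16 * eLpNorm F (finrank ℝ E) (μ.restrict Ω)) ^ finrank ℝ E := by
  obtain ⟨A, hA, g, hgA, hg⟩ := h.exists_locally_lipschitz_selection hΩ hv hF
  have h16 : ‖(16 : ℝ)‖ₑ = 16 := by rw [Real.enorm_eq_ofReal (by norm_num), ENNReal.ofReal_ofNat]
  calc μ (⋃ x ∈ Ω, subdiffOn Ω v x) ≤ μ (g '' A) := measure_mono hgA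
    _ ≤ eLpNorm (fun x ↦ ((16 * ‖F x‖₊ : ℝ≥0) : ℝ≥0∞)) (finrank ℝ E) (μ.restrict Ω) ^
          finrank ℝ E :=
        addHaar_image_le_eLpNorm_pow_of_locally_lipschitz μ hΩ.measurableSet hμΩ hA
          (continuousOn_const.mul hF.nnnorm) hg
    _ = eLpNorm ((16 : ℝ) • F) (finrank ℝ E) (μ.restrict Ω) ^ finrank ℝ E := by
        congr 1
        exact eLpNorm_congr_enorm_ae <| .of_forall fun x ↦ by
          simp [enorm_mul, h16, ← enorm_eq_nnnorm]
    _ = (16 * eLpNorm F (finrank ℝ E) (μ.restrict Ω)) ^ finrank ℝ E := by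
        rw [eLpNorm_const_smul, h16]

theorem IsParaboloidSupersol.neg_le_add_diam_mul_eLpNorm (h : IsParaboloidSupersol Λ Ω F v)
    (hΩ : IsOpen Ω) (hΩb : Bornology.IsBounded Ω) (hv : ContinuousOn v (closure Ω))
    (hF : ContinuousOn F Ω) (hFn : MemLp F (finrank ℝ E) (μ.restrict Ω)) {m : ℝ}
    (hm : ∀ z ∈ frontier Ω, -m ≤ v z) {x : E} (hx : x ∈ Ω) :
    -v x ≤ m + 16 * (eLpNorm F (finrank ℝ E) (μ.restrict Ω)).toReal /
      μ.real (ball 0 1) ^ (1 / finrank ℝ E : ℝ) * diam Ω := by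
  set J := (eLpNorm F (finrank ℝ E) (μ.restrict Ω)).toReal with hJ
  set r₀ := 16 * J / μ.real (ball 0 1) ^ (1 / finrank ℝ E : ℝ)
  by_contra! hlt
  obtain ⟨r, hrd, hr⟩ : ∃ r, r * diam Ω < -v x - m ∧ r₀ < r := by
    have hnear : ∀ᶠ r in 𝓝 r₀, r * diam Ω < -v x - m :=
      (continuous_mul_const (diam Ω)).continuousAt.eventually_lt_const (by linarith)
    exact ((hnear.filter_mono nhdsWithin_le_nhds).and self_mem_nhdsWithin).exists (f := 𝓝[>] r₀)
  have hslopes : μ (ball 0 r) ≤ (16 * eLpNorm F (finrank ℝ E) (μ.restrict Ω)) ^ finrank ℝ E :=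
    (measure_mono (ball_subset_iUnion_subdiffOn hΩ hΩb hv hm hx hrd.le)).trans
      (h.addHaar_iUnion_subdiffOn_le μ hΩ hΩb.measure_lt_top.ne (hv.mono subset_closure) hF)
  have hreal : μ.real (ball 0 r) ≤ (16 * J) ^ finrank ℝ E := by
    have hfin : (16 * eLpNorm F (finrank ℝ E) (μ.restrict Ω)) ^ finrank ℝ E ≠ ∞ :=
      ENNReal.pow_ne_top (ENNReal.mul_ne_top ENNReal.ofNat_ne_top hFn.2.ne)
    simpa [Measure.real, hJ] using ENNReal.toReal_mono hfin hslopes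
  have hr0 : 0 ≤ r := hr.le.trans' (by positivity)
  exact (radius_le_of_addHaar_ball_le μ hr0 (by positivity) hreal).not_gt hr

end OneSidedEstimate

section RankOneSpectrum

open Matrix

variable {ι K : Type*} [Fintype ι] [DecidableEq ι] [Field K]

theorem mem_spectrum_iff_exists_mulVec_eq_smul {A : Matrix ι ι K} {μ : K} :
    μ ∈ spectrum K A ↔ ∃ y ≠ 0, A *ᵥ y = μ • y := by
  simp only [← spectrum_toLin', ← End.hasEigenvalue_iff_mem_spectrum, End.hasEigenvalue_iff,
    Submodule.ne_bot_iff, End.mem_eigenspace_iff, toLin'_apply]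
  simp only [and_comm, ne_eq]

variable {w : ι → K} (β γ : K)

theorem smul_vecMulVec_sub_smul_one_mulVec (w y : ι → K) :
    (β • vecMulVec w w - γ • 1) *ᵥ y = (β * (w ⬝ᵥ y)) • w - γ • y := by
  simp [sub_mulVec, smul_mulVec, vecMulVec_mulVec, mul_smul]

theorem spectrum_smul_vecMulVec_sub_smul_one_subset (hw : w ⬝ᵥ w = 1) :
    spectrum K (β • vecMulVec w w - γ • 1) ⊆ {-γ, β - γ} := by
  intro μ hμ
  obtain ⟨y, hy, hμy⟩ := mem_spectrum_iff_exists_mulVec_eq_smul.mp hμ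
  rw [smul_vecMulVec_sub_smul_one_mulVec, sub_eq_iff_eq_add, ← add_smul] at hμy
  have hdot : β * (w ⬝ᵥ y) = (μ + γ) * (w ⬝ᵥ y) := by
    simpa [hw] using congrArg (w ⬝ᵥ ·) hμy
  by_cases hwy : w ⬝ᵥ y = 0
  · have hμγ : μ + γ = 0 := by simpa [hwy, hy] using hμy.symm
    exact .inl (eq_neg_of_add_eq_zero_left hμγ)
  · exact .inr (eq_sub_of_add_eq (mul_right_cancel₀ hwy hdot).symm)

theorem sub_mem_spectrum_smul_vecMulVec_sub_smul_one (hw : w ⬝ᵥ w = 1) :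
    β - γ ∈ spectrum K (β • vecMulVec w w - γ • 1) := by
  refine mem_spectrum_iff_exists_mulVec_eq_smul.mpr ⟨w, ?_, ?_⟩
  · rintro rfl
    simp at hw
  · rw [smul_vecMulVec_sub_smul_one_mulVec, hw, mul_one, sub_smul]

end RankOneSpectrum

section PartialTrace

open Matrix

variable {n : ℕ}

theorem monotone_sortedEig (X : Matrix (Fin n) (Fin n) ℝ) : Monotone (sortedEig X) := by
  unfold sortedEig
  split_ifs with hX
  · exact Tuple.monotone_sort hX.eigenvalues
  · exact monotone_const

theorem range_sortedEig {X : Matrix (Fin n) (Fin n) ℝ} (hX : X.IsHermitian) :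
    range (sortedEig X) = spectrum ℝ X := by
  rw [hX.spectrum_real_eq_range_eigenvalues, sortedEig, dif_pos hX]
  exact (Tuple.sort hX.eigenvalues).surjective.range_comp hX.eigenvalues

variable {a : Fin n → ℝ}

theorem sum_mul_add_mul_sub_le_sum_mul (ha : ∀ i, 0 ≤ a i) {s : Fin n → ℝ} {c : ℝ}
    (hs : ∀ i, c ≤ s i) (k : Fin n) :
    (∑ i, a i) * c + a k * (s k - c) ≤ ∑ i, a i * s i := by
  have hk : a k * (s k - c) ≤ ∑ i, a i * (s i - c) :=
    Finset.single_le_sum (f := fun i ↦ a i * (s i - c))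
      (fun i _ ↦ mul_nonneg (ha i) (sub_nonneg.mpr (hs i))) (Finset.mem_univ k)
  simp only [mul_sub, Finset.sum_sub_distrib, ← Finset.sum_mul] at hk ⊢
  linarith

theorem isHermitian_smul_vecMulVec_sub_smul_one (β γ : ℝ) (w : Fin n → ℝ) :
    (β • vecMulVec w w - γ • 1 : Matrix (Fin n) (Fin n) ℝ).IsHermitian := by
  simp [IsHermitian]

theorem sortedEig_zero_le [NeZero n] {X : Matrix (Fin n) (Fin n) ℝ} (hX : X.IsHermitian) {μ : ℝ}
    (hμ : μ ∈ spectrum ℝ X) : sortedEig X 0 ≤ μ := by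
  obtain ⟨i, rfl⟩ := range_sortedEig hX ▸ hμ
  exact monotone_sortedEig X (Fin.zero_le i)

theorem le_sortedEig_lastIdx [NeZero n] {X : Matrix (Fin n) (Fin n) ℝ} (hX : X.IsHermitian) {μ : ℝ}
    (hμ : μ ∈ spectrum ℝ X) : μ ≤ sortedEig X (lastIdx n) := by
  obtain ⟨i, rfl⟩ := range_sortedEig hX ▸ hμ
  exact monotone_sortedEig X (Fin.le_def.mpr (Nat.le_sub_one_of_lt i.2))

theorem sortedEig_smul_vecMulVec_sub_smul_one (β γ : ℝ) {w : Fin n → ℝ} (hw : w ⬝ᵥ w = 1)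
    (i : Fin n) : sortedEig (β • vecMulVec w w - γ • 1) i = -γ ∨
      sortedEig (β • vecMulVec w w - γ • 1) i = β - γ := by
  refine spectrum_smul_vecMulVec_sub_smul_one_subset β γ hw ?_
  rw [← range_sortedEig (isHermitian_smul_vecMulVec_sub_smul_one β γ w)]
  exact mem_range_self i

theorem le_Ma_smul_vecMulVec_sub_smul_one [NeZero n] (ha : ∀ i, 0 ≤ a i) {β : ℝ} (hβ : 0 ≤ β)
    (γ : ℝ) {w : Fin n → ℝ} (hw : w ⬝ᵥ w = 1) :
    a (lastIdx n) * β - (∑ i, a i) * γ ≤ Ma a (β • vecMulVec w w - γ • 1) := by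
  set X : Matrix (Fin n) (Fin n) ℝ := β • vecMulVec w w - γ • 1
  have hlast : β - γ ≤ sortedEig X (lastIdx n) :=
    le_sortedEig_lastIdx (isHermitian_smul_vecMulVec_sub_smul_one β γ w)
      (sub_mem_spectrum_smul_vecMulVec_sub_smul_one β γ hw)
  have hlower (i : Fin n) : -γ ≤ sortedEig X i := by
    rcases sortedEig_smul_vecMulVec_sub_smul_one β γ hw i with h | h <;> linarith
  calc a (lastIdx n) * β - (∑ i, a i) * γ
      ≤ (∑ i, a i) * -γ + a (lastIdx n) * (sortedEig X (lastIdx n) - -γ) := by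
        linarith [mul_le_mul_of_nonneg_left hlast (ha (lastIdx n))]
    _ ≤ Ma a X := sum_mul_add_mul_sub_le_sum_mul ha hlower _

theorem Ma_smul_vecMulVec_sub_smul_one_le [NeZero n] (ha : ∀ i, 0 ≤ a i) {β : ℝ} (hβ : β ≤ 0)
    (γ : ℝ) {w : Fin n → ℝ} (hw : w ⬝ᵥ w = 1) :
    Ma a (β • vecMulVec w w - γ • 1) ≤ a 0 * β - (∑ i, a i) * γ := by
  set X : Matrix (Fin n) (Fin n) ℝ := β • vecMulVec w w - γ • 1
  have hzero : sortedEig X 0 ≤ β - γ :=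
    sortedEig_zero_le (isHermitian_smul_vecMulVec_sub_smul_one β γ w)
      (sub_mem_spectrum_smul_vecMulVec_sub_smul_one β γ hw)
  have hupper (i : Fin n) : γ ≤ -sortedEig X i := by
    rcases sortedEig_smul_vecMulVec_sub_smul_one β γ hw i with h | h <;> linarith
  have hsum := sum_mul_add_mul_sub_le_sum_mul ha hupper 0
  simp only [mul_neg, Finset.sum_neg_distrib] at hsum
  unfold Ma
  linarith [mul_le_mul_of_nonneg_left hzero (ha 0)]

theorem hess_paraboloid (β γ : ℝ) (e q x : En n) :
    hess (paraboloid β γ e q) x = β • vecMulVec e e - γ • 1 := by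
  ext i j
  simp [hess, iteratedFDeriv_two_paraboloid, EuclideanSpace.inner_single_right, vecMulVec_apply,
    Matrix.one_apply, eq_comm (a := i)]

theorem dotProduct_self_eq_one_of_norm_eq_one {e : En n} (he : ‖e‖ = 1) : ⇑e ⬝ᵥ ⇑e = 1 := by
  calc ⇑e ⬝ᵥ ⇑e = ⟪e, e⟫ := (EuclideanSpace.inner_eq_star_dotProduct e e).symm
    _ = 1 := by rw [real_inner_self_eq_norm_sq, he, one_pow]

end PartialTrace

section ViscositySolutions

variable {n : ℕ} [NeZero n] {a : Fin n → ℝ} {Ω : Set (En n)} {f u : En n → ℝ}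

theorem ClassA.aStar_pos (ha : ClassA a) : 0 < aStar a := lt_min ha.2.1 ha.2.2

theorem IsViscSupersol.isParaboloidSupersol (ha : ClassA a) (h : IsViscSupersol a Ω f u) :
    IsParaboloidSupersol ((∑ i, a i) / aStar a) Ω ((aStar a)⁻¹ • f) u := by
  refine isParaboloidSupersol_inv_smul ha.aStar_pos fun x₀ hx₀ β γ hβ e q he hmin ↦ ?_
  have htest := h x₀ hx₀ _ (contDiff_paraboloid β γ e q) (hmin.on Ω)
  rw [hess_paraboloid] at htest
  calc aStar a * β - (∑ i, a i) * γ ≤ a (lastIdx n) * β - (∑ i, a i) * γ := by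
        gcongr; exact min_le_right _ _
    _ ≤ Ma a (β • Matrix.vecMulVec e e - γ • 1) :=
        le_Ma_smul_vecMulVec_sub_smul_one ha.1 hβ γ (dotProduct_self_eq_one_of_norm_eq_one he)
    _ ≤ f x₀ := htest

theorem IsViscSubsol.isParaboloidSupersol_neg (ha : ClassA a) (h : IsViscSubsol a Ω f u) :
    IsParaboloidSupersol ((∑ i, a i) / aStar a) Ω ((aStar a)⁻¹ • -f) (-u) := by
  refine isParaboloidSupersol_inv_smul ha.aStar_pos fun x₀ hx₀ β γ hβ e q he hmin ↦ ?_
  have hmax : IsLocalMaxOn (fun z ↦ u z - paraboloid (-β) (-γ) e (-q) z) Ω x₀ := by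
    simpa [← neg_paraboloid, add_comm] using (hmin.neg).on Ω
  have htest := h x₀ hx₀ _ (contDiff_paraboloid (-β) (-γ) e (-q)) hmax
  rw [hess_paraboloid] at htest
  have hMa := Ma_smul_vecMulVec_sub_smul_one_le ha.1 (neg_nonpos.mpr hβ) (-γ)
    (dotProduct_self_eq_one_of_norm_eq_one he)
  calc aStar a * β - (∑ i, a i) * γ ≤ a 0 * β - (∑ i, a i) * γ := by
        gcongr; exact min_le_left _ _
    _ = -(a 0 * -β - (∑ i, a i) * -γ) := by ring
    _ ≤ -f x₀ := neg_le_neg (htest.trans hMa)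

end ViscositySolutions

section AlexandrovBakelmanPucci

theorem toReal_eLpNorm_natCast_eq_lpNormOn {n k : ℕ} (hk : k ≠ 0) {Ω : Set (En n)} {f : En n → ℝ}
    (hf : MemLp f k (volume.restrict Ω)) :
    (eLpNorm f k (volume.restrict Ω)).toReal = lpNormOn k Ω f := by
  rw [hf.eLpNorm_eq_integral_rpow_norm (Nat.cast_ne_zero.mpr hk) (ENNReal.natCast_ne_top k),
    ENNReal.toReal_ofReal (by positivity)]
  simp [lpNormOn]

theorem lpNormOn_neg {n : ℕ} (p : ℝ) (Ω : Set (En n)) (f : En n → ℝ) :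
    lpNormOn p Ω (-f) = lpNormOn p Ω f := by
  simp [lpNormOn]

theorem memLp_restrict_of_continuousOn_of_norm_le {X F : Type*} [TopologicalSpace X]
    [MeasurableSpace X] [OpensMeasurableSpace X] [NormedAddCommGroup F]
    [SecondCountableTopologyEither X F] {μ : Measure X} {Ω : Set X} (hΩ : MeasurableSet Ω)
    (hμΩ : μ Ω ≠ ∞) {f : X → F} (hf : ContinuousOn f Ω) {K : ℝ} (hK : ∀ x ∈ Ω, ‖f x‖ ≤ K)
    (p : ℝ≥0∞) : MemLp f p (μ.restrict Ω) := by
  have : IsFiniteMeasure (μ.restrict Ω) := isFiniteMeasure_restrict.mpr hμΩ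
  exact .of_bound (hf.aestronglyMeasurable hΩ) K (ae_restrict_of_forall_mem hΩ hK)

/-- The constant `16 / |B₁|^(1/n)` of the ABP estimate in `ℝⁿ`. -/
noncomputable def abpConst (n : ℕ) : ℝ :=
  16 / volume.real (ball (0 : En n) 1) ^ (1 / n : ℝ)

theorem abpConst_pos (n : ℕ) : 0 < abpConst n := by
  have hω : 0 < volume.real (ball (0 : En n) 1) :=
    ENNReal.toReal_pos (measure_ball_pos _ 0 one_pos).ne' measure_ball_lt_top.ne
  unfold abpConst
  positivity

variable {n : ℕ} [NeZero n] {Ω : Set (En n)} {f : En n → ℝ}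

theorem IsParaboloidSupersol.neg_le_add_abpConst_mul {Λ c m : ℝ} (hc : 0 < c) {v : En n → ℝ}
    (h : IsParaboloidSupersol Λ Ω (c⁻¹ • f) v) (hΩ : IsOpen Ω) (hΩb : Bornology.IsBounded Ω)
    (hv : ContinuousOn v (closure Ω)) (hf : ContinuousOn f Ω)
    (hfn : MemLp f n (volume.restrict Ω)) (hm : ∀ z ∈ frontier Ω, -m ≤ v z) {x : En n}
    (hx : x ∈ Ω) :
    -v x ≤ m + abpConst n / c * diam Ω * lpNormOn n Ω f := by
  have hscale : (eLpNorm (c⁻¹ • f) n (volume.restrict Ω)).toReal = c⁻¹ * lpNormOn n Ω f := by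
    rw [eLpNorm_const_smul, ENNReal.toReal_mul, toReal_enorm, Real.norm_of_nonneg (by positivity),
      toReal_eLpNorm_natCast_eq_lpNormOn (NeZero.ne n) hfn]
  have hest := h.neg_le_add_diam_mul_eLpNorm volume hΩ hΩb hv (hf.const_smul c⁻¹)
    (by simpa using hfn.const_smul c⁻¹) hm hx
  rw [finrank_euclideanSpace_fin, hscale] at hest
  refine hest.trans_eq ?_
  unfold abpConst
  ring

end AlexandrovBakelmanPucci

end

theorem abp_bilateral_general (n : ℕ) [NeZero n] :
    ∃ C : ℝ, 0 < C ∧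
      ∀ a : Fin n → ℝ, ClassA a →
      ∀ Ω : Set (En n), IsOpen Ω → Bornology.IsBounded Ω →
      ∀ f u : En n → ℝ,
        ContinuousOn f Ω → MemLp f n (volume.restrict Ω) →
        ContinuousOn u (closure Ω) →
        IsViscSubsol a Ω f u → IsViscSupersol a Ω f u →
        ∀ x ∈ Ω,
          |u x| ≤ sSup ((fun y => |u y|) '' frontier Ω) +
            (C / aStar a) * Metric.diam Ω * lpNormOn (n : ℝ) Ω f := by
  refine ⟨abpConst n, abpConst_pos n, fun a ha Ω hΩ hΩb f u hf hfn hu hsub hsuper x hx ↦ ?_⟩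
  have hbdry (y : En n) (hy : y ∈ frontier Ω) : |u y| ≤ sSup ((fun y ↦ |u y|) '' frontier Ω) :=
    le_csSup ((hΩb.isCompact_closure.of_isClosed_subset isClosed_frontier
      frontier_subset_closure).bddAbove_image (hu.mono frontier_subset_closure).abs)
      (mem_image_of_mem _ hy)
  refine abs_le'.mpr ⟨?_, ?_⟩
  · simpa [lpNormOn_neg] using (hsub.isParaboloidSupersol_neg ha).neg_le_add_abpConst_mul
      ha.aStar_pos hΩ hΩb hu.neg hf.neg hfn.neg
      (fun y hy ↦ neg_le_neg ((le_abs_self _).trans (hbdry y hy))) hx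
  · exact (hsuper.isParaboloidSupersol ha).neg_le_add_abpConst_mul ha.aStar_pos hΩ hΩb hu hf hfn
      (fun y hy ↦ neg_le.mp ((neg_le_abs _).trans (hbdry y hy))) hx

/-- **ABP estimate (Theorem 1.1).** For a bounded open `Ω ⊆ ℝⁿ` of diameter `d`, an operator
`M_a` of class `𝒜` and `f` continuous and bounded on `Ω`, every viscosity solution
`u ∈ C(Ω̄)` of `M_a(D²u) = f` satisfies
`sup_Ω |u| ≤ sup_{∂Ω} |u| + (C_n / a*) d ‖f‖_{L^n(Ω)}` with `C_n` depending only on `n`. -/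
theorem abp_bilateral (n : ℕ) [NeZero n] :
    ∃ C : ℝ, 0 < C ∧
      ∀ a : Fin n → ℝ, ClassA a →
      ∀ Ω : Set (En n), IsOpen Ω → Bornology.IsBounded Ω →
      ∀ f u : En n → ℝ,
        ContinuousOn f Ω → (∃ K, ∀ x ∈ Ω, |f x| ≤ K) →
        ContinuousOn u (closure Ω) →
        IsViscSubsol a Ω f u → IsViscSupersol a Ω f u →
        ∀ x ∈ Ω,
          |u x| ≤ sSup ((fun y => |u y|) '' frontier Ω) +
            (C / aStar a) * Metric.diam Ω * lpNormOn (n : ℝ) Ω f := by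
  obtain ⟨C, hC, habp⟩ := abp_bilateral_general n
  exact ⟨C, hC, fun a ha Ω hΩ hΩb f u hf ⟨_, hK⟩ ↦ habp a ha Ω hΩ hΩb f u hf
    (memLp_restrict_of_continuousOn_of_norm_le hΩ.measurableSet hΩb.measure_lt_top.ne hf hK n)⟩
end

section
/- Comparison principle: let Ω ⊂ ℝⁿ be a bounded open set, M_a a weighted partial trace operator of class 𝒜̄, and f a bounded continuous function on Ω. Let u be upper semicontinuous on Ω̄ and a viscosity subsolution of M_a(D²u) = f in Ω, and let v be lower semicontinuous on Ω̄ and a viscosity supersolution of M_a(D²v) = f in Ω. If u ≤ v on ∂Ω, then u ≤ v in Ω. -/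
open Set Metric MeasureTheory Filter

/-!
Suppose that `u - v` is positive somewhere, and add to `u` a small multiple of `‖·‖²` to gain a
strict inequality. Sup-convolution replaces this function and `-v` by semiconvex functions `U` and
`W`, which evaluate them at two nearby points. For every small slope `p`, some affine function of
slope `p` touches `U + W` from above; let `Γ` be the concave envelope of `U + W`.

The semiconvex `U` lies below the semiconcave `Γ - W`, so a `C^{1,1}` function `φ` fits between
them; where `Γ` touches `U + W`, `φ` touches `U` from above and, up to an affine function, `-W` from
below. The slopes of touching affine functions are the values of a Lipschitz gradient, and a
Lipschitz map cannot send a null set onto a ball. Some contact point therefore avoids the set where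
`∇φ` is not differentiable, which is null by Rademacher's theorem. The Hessian of `φ` there gives
opposite second-order superjets of `U` and `W`, hence matrices `X` and `-X` for the perturbed `u`
and `-v` at nearby points, in place of the usual appeal to Alexandrov's theorem. Undoing the
perturbation separates the two matrices by a multiple of the identity, which contradicts the two
equations.
-/

open scoped Topology

section Eigenvalues

open Polynomial

variable {n : ℕ} {X : Matrix (Fin n) (Fin n) ℝ}

lemma monotone_sortedEig_s5 (hX : X.IsHermitian) : Monotone (sortedEig X) := by
  simp only [sortedEig, hX, dif_pos]
  exact Tuple.monotone_sort hX.eigenvalues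

lemma charpoly_eq_prod_sortedEig (hX : X.IsHermitian) :
    X.charpoly = ∏ i, (Polynomial.X - C (sortedEig X i)) := by
  simp only [hX.charpoly_eq, sortedEig, hX, dif_pos]
  exact (Equiv.prod_comp (Tuple.sort hX.eigenvalues)
    fun i => Polynomial.X - C (hX.eigenvalues i)).symm

lemma eq_of_monotone_of_prod_X_sub_C_eq {g h : Fin n → ℝ} (hg : Monotone g) (hh : Monotone h)
    (hprod : ∏ i, (Polynomial.X - C (g i)) = ∏ i, (Polynomial.X - C (h i))) : g = h := by
  have roots_eq (k : Fin n → ℝ) :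
      (∏ i, (Polynomial.X - C (k i))).roots = (List.ofFn k : Multiset ℝ) := by
    rw [roots_prod _ _ (Finset.prod_ne_zero_iff.mpr fun i _ => X_sub_C_ne_zero _)]
    simp only [roots_X_sub_C, Multiset.bind_singleton, Fin.univ_val_map]
  have hperm : (List.ofFn g).Perm (List.ofFn h) := by
    rw [← Multiset.coe_eq_coe, ← roots_eq, ← roots_eq, hprod]
  exact List.ofFn_injective
    (hperm.eq_of_pairwise' hg.sortedLE_ofFn.pairwise hh.sortedLE_ofFn.pairwise)

lemma sortedEig_add_smul_one (hX : X.IsHermitian) (t : ℝ) (i : Fin n) :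
    sortedEig (X + t • (1 : Matrix (Fin n) (Fin n) ℝ)) i = sortedEig X i + t := by
  have hXt : (X + t • (1 : Matrix (Fin n) (Fin n) ℝ)).IsHermitian :=
    hX.add (Matrix.isHermitian_one.smul (IsSelfAdjoint.all t))
  have hshift : X + t • (1 : Matrix (Fin n) (Fin n) ℝ) = X - Matrix.scalar (Fin n) (-t) := by
    rw [map_neg, sub_neg_eq_add, Matrix.smul_one_eq_diagonal, Matrix.scalar_apply]
  refine congrFun (eq_of_monotone_of_prod_X_sub_C_eq (monotone_sortedEig_s5 hXt)
    ((monotone_sortedEig_s5 hX).add_const t) ?_) i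
  calc ∏ i, (Polynomial.X - C (sortedEig (X + t • (1 : Matrix (Fin n) (Fin n) ℝ)) i))
      = X.charpoly.comp (Polynomial.X + C (-t)) := by
        rw [← charpoly_eq_prod_sortedEig hXt, hshift, Matrix.charpoly_sub_scalar]
    _ = ∏ i, (Polynomial.X - C (sortedEig X i + t)) := by
        rw [charpoly_eq_prod_sortedEig hX, prod_comp]
        refine Finset.prod_congr rfl fun i _ => ?_
        simp only [sub_comp, X_comp, C_comp, map_neg, map_add]
        ring

lemma Ma_add_smul_one (a : Fin n → ℝ) (hX : X.IsHermitian) (t : ℝ) :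
    Ma a (X + t • (1 : Matrix (Fin n) (Fin n) ℝ)) = Ma a X + t * ∑ i, a i := by
  simp only [Ma, sortedEig_add_smul_one hX, mul_add, Finset.sum_add_distrib, Finset.sum_mul,
    mul_comm t]

end Eigenvalues

section SecondDifferences

variable {E : Type*} [NormedAddCommGroup E] {f g : E → ℝ} {b c : ℝ}

/-- A quadratic upper bound on the second differences of `f`, the one-sided form of `D²f ≤ c` that
makes sense for nonsmooth functions. -/
def SecondDiffLE (c : ℝ) (f : E → ℝ) : Prop :=
  ∀ x z, f (x + z) + f (x - z) ≤ 2 * f x + c * ‖z‖ ^ 2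

lemma SecondDiffLE.add (hf : SecondDiffLE b f) (hg : SecondDiffLE c g) :
    SecondDiffLE (b + c) fun x => f x + g x := fun x z => by
  linarith [hf x z, hg x z]

variable [NormedSpace ℝ E]

/-- `f` is of class `C^{1,1}`: differentiable on the whole space with a globally Lipschitz
derivative. -/
def IsC11 (f : E → ℝ) : Prop :=
  Differentiable ℝ f ∧ ∃ K, LipschitzWith K (fderiv ℝ f)

lemma exists_subgradient [FiniteDimensional ℝ E] (hf : ConvexOn ℝ univ f) (x : E) :
    ∃ q : E →L[ℝ] ℝ, ∀ y, f x + q (y - x) ≤ f y := by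
  have hopen : IsOpen {p : E × ℝ | p.1 ∈ univ ∧ f p.1 < p.2} := by
    simp only [mem_univ, true_and]
    exact isOpen_lt (hf.locallyLipschitz.continuous.comp continuous_fst) continuous_snd
  obtain ⟨F, hF⟩ := geometric_hahn_banach_open_point hf.convex_strict_epigraph hopen
    (x := (x, f x)) (fun h => lt_irrefl _ h.2)
  have F_eq (y : E) (t : ℝ) : F (y, t) = F (y, 0) + t * F (0, 1) := by
    rw [← smul_eq_mul, ← map_smul, ← map_add, Prod.smul_mk, Prod.mk_add_mk, smul_zero, add_zero,
      zero_add, smul_eq_mul, mul_one]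
  have vertical_neg : F (0, 1) < 0 := by
    have := hF (x, f x + 1) ⟨mem_univ _, lt_add_one _⟩
    rw [F_eq, F_eq x (f x)] at this
    linarith
  refine ⟨(-F (0, 1))⁻¹ • F.comp (.inl ℝ E ℝ), fun y => le_of_forall_pos_le_add fun ε hε => ?_⟩
  have separated := hF (y, f y + ε) ⟨mem_univ _, lt_add_of_pos_right _ hε⟩
  rw [F_eq, F_eq x (f x)] at separated
  have slope_le : (-F (0, 1))⁻¹ * (F (y, 0) - F (x, 0)) ≤ f y + ε - f x := by
    rw [inv_mul_le_iff₀ (neg_pos.mpr vertical_neg)]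
    linarith
  have hsub : F (y - x, 0) = F (y, 0) - F (x, 0) := by
    rw [← map_sub, Prod.mk_sub_mk, sub_zero]
  simp only [smul_apply, ContinuousLinearMap.comp_apply,
    ContinuousLinearMap.inl_apply, smul_eq_mul, hsub]
  linarith

lemma IsC11.sub (hf : IsC11 f) (hg : IsC11 g) : IsC11 fun x => f x - g x := by
  obtain ⟨hf, K, hK⟩ := hf
  obtain ⟨hg, K', hK'⟩ := hg
  refine ⟨hf.sub hg, K + K', ?_⟩
  rw [show fderiv ℝ (fun x => f x - g x) = fun x => fderiv ℝ f x - fderiv ℝ g x from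
    funext fun x => fderiv_fun_sub (hf x) (hg x)]
  exact hK.sub hK'

lemma hasFDerivAt_of_abs_sub_le {L : E →L[ℝ] ℝ} {x : E}
    (h : ∀ z, |f (x + z) - f x - L z| ≤ c * ‖z‖ ^ 2) : HasFDerivAt f L x := by
  rw [hasFDerivAt_iff_isLittleO_nhds_zero]
  refine Asymptotics.IsBigO.trans_isLittleO (g := fun z : E => ‖z‖ ^ 2)
    (.of_bound c <| .of_forall fun z => ?_) (Asymptotics.isLittleO_norm_pow_id one_lt_two)
  simpa only [Real.norm_eq_abs, abs_pow, abs_norm] using h z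

lemma opNorm_le_of_le_sq_add_sq {ℓ : E →L[ℝ] ℝ} (hc : 0 ≤ c) (hb : 0 < b)
    (h : ∀ z, ℓ z ≤ c * (b ^ 2 + ‖z‖ ^ 2)) : ‖ℓ‖ ≤ 2 * c * b := by
  have le_of_unit {z : E} (hz : ‖z‖ = 1) : ℓ z ≤ 2 * c * b := by
    have := h (b • z)
    rw [map_smul, smul_eq_mul, norm_smul, hz, mul_one, Real.norm_of_nonneg hb.le] at this
    exact le_of_mul_le_mul_left (by linarith) hb
  refine ContinuousLinearMap.opNorm_le_of_unit_norm (by positivity) fun z hz => abs_le.mpr ⟨?_, ?_⟩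
  · have := le_of_unit (z := -z) (by rwa [norm_neg])
    rw [map_neg] at this
    linarith
  · exact le_of_unit hz

lemma isC11_of_convexOn_of_secondDiffLE [FiniteDimensional ℝ E] (hf : ConvexOn ℝ univ f)
    (hc : 0 ≤ c) (hfc : SecondDiffLE c f) : IsC11 f := by
  choose G hG using exists_subgradient hf
  have le_add (x z : E) : f x + G x z ≤ f (x + z) := by
    simpa only [add_sub_cancel_left] using hG x (x + z)
  have add_le (x z : E) : f (x + z) ≤ f x + G x z + c * ‖z‖ ^ 2 := by
    have := le_add x (-z)
    rw [map_neg, ← sub_eq_add_neg x z] at this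
    linarith [hfc x z]
  have hderiv (x : E) : HasFDerivAt f (G x) x :=
    hasFDerivAt_of_abs_sub_le (c := c) fun z =>
      abs_le.mpr ⟨by nlinarith [le_add x z, sq_nonneg ‖z‖], by linarith [add_le x z]⟩
  refine ⟨fun x => (hderiv x).differentiableAt, (2 * c).toNNReal, ?_⟩
  rw [funext fun x => (hderiv x).fderiv]
  refine LipschitzWith.of_dist_le_mul fun x y => ?_
  rw [Real.coe_toNNReal _ (by positivity), dist_eq_norm, dist_eq_norm]
  rcases eq_or_ne x y with rfl | hxy
  · simp only [sub_self, norm_zero, mul_zero, le_refl]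
  refine opNorm_le_of_le_sq_add_sq hc (norm_pos_iff.mpr (sub_ne_zero.mpr hxy)) fun z => ?_
  have lower := le_add x (y - x + z)
  have upper := add_le y z
  have base := add_le x (y - x)
  rw [show x + (y - x + z) = y + z by abel, map_add] at lower
  rw [add_sub_cancel, norm_sub_rev] at base
  rw [sub_apply]
  linarith

lemma secondDiffLE_zero_of_concaveOn (hf : ConcaveOn ℝ univ f) : SecondDiffLE 0 f := fun x z => by
  have := hf.2 (mem_univ (x + z)) (mem_univ (x - z)) one_half_pos.le one_half_pos.le (add_halves 1)
  rw [show (1 / 2 : ℝ) • (x + z) + (1 / 2 : ℝ) • (x - z) = x by module] at this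
  simp only [smul_eq_mul] at this
  linarith

end SecondDifferences

section ConvexEnvelope

variable {E : Type*} [AddCommGroup E] [Module ℝ E] {f k : E → ℝ}

lemma convexOn_iSup {ι : Type*} [Nonempty ι] {F : ι → E → ℝ} (hF : ∀ i, ConvexOn ℝ univ (F i))
    (hbdd : ∀ x, BddAbove (range fun i => F i x)) : ConvexOn ℝ univ fun x => ⨆ i, F i x := by
  refine ⟨convex_univ, fun x _ y _ s t hs ht hst => ciSup_le fun i => ?_⟩
  calc F i (s • x + t • y) ≤ s • F i x + t • F i y := (hF i).2 (mem_univ x) (mem_univ y) hs ht hst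
    _ ≤ s • (⨆ i, F i x) + t • ⨆ i, F i y := by
      gcongr
      exacts [le_ciSup (hbdd x) i, le_ciSup (hbdd y) i]

/-- The convex envelope of `f`, the largest convex function below `f`. The supremum is a junk value
when `f` has no convex minorant. -/
noncomputable def convexEnvelope (f : E → ℝ) (x : E) : ℝ :=
  ⨆ k : {k : E → ℝ // ConvexOn ℝ univ k ∧ ∀ y, k y ≤ f y}, k.1 x

lemma convexEnvelope_bddAbove (f : E → ℝ) (x : E) :
    BddAbove (range fun k : {k : E → ℝ // ConvexOn ℝ univ k ∧ ∀ y, k y ≤ f y} => k.1 x) :=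
  ⟨f x, by rintro _ ⟨k, rfl⟩; exact k.2.2 x⟩

lemma le_convexEnvelope (hk : ConvexOn ℝ univ k) (hkf : ∀ y, k y ≤ f y) (x : E) :
    k x ≤ convexEnvelope f x :=
  le_ciSup (convexEnvelope_bddAbove f x) ⟨k, hk, hkf⟩

lemma convexEnvelope_le (hk : ConvexOn ℝ univ k) (hkf : ∀ y, k y ≤ f y) (x : E) :
    convexEnvelope f x ≤ f x :=
  have : Nonempty {k : E → ℝ // ConvexOn ℝ univ k ∧ ∀ y, k y ≤ f y} := ⟨k, hk, hkf⟩
  ciSup_le fun k => k.2.2 x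

lemma convexOn_convexEnvelope (hk : ConvexOn ℝ univ k) (hkf : ∀ y, k y ≤ f y) :
    ConvexOn ℝ univ (convexEnvelope f) :=
  have : Nonempty {k : E → ℝ // ConvexOn ℝ univ k ∧ ∀ y, k y ≤ f y} := ⟨k, hk, hkf⟩
  convexOn_iSup (fun k => k.2.1) (convexEnvelope_bddAbove f)

end ConvexEnvelope

section Interposition

variable {E : Type*} [NormedAddCommGroup E] [InnerProductSpace ℝ E] {f g k P Q : E → ℝ} {b c : ℝ}

/- The average of two opposite translates of the envelope, lowered by `c‖z‖² / 2`, is again a convex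
minorant of `f`. -/
lemma secondDiffLE_convexEnvelope (hfc : SecondDiffLE c f) (hk : ConvexOn ℝ univ k)
    (hkf : ∀ y, k y ≤ f y) : SecondDiffLE c (convexEnvelope f) := fun x z => by
  have henv := convexOn_convexEnvelope hk hkf
  have haverage : ConvexOn ℝ univ fun y =>
      (1 / 2 : ℝ) • (convexEnvelope f (y + z) + convexEnvelope f (y + -z)) +
        -(c / 2 * ‖z‖ ^ 2) :=
    (((henv.translate_left z).add (henv.translate_left (-z))).smul one_half_pos.le).add_const _
  have := le_convexEnvelope haverage (f := f) (fun y => ?_) x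
  · simp only [smul_eq_mul, ← sub_eq_add_neg] at this
    linarith
  · simp only [smul_eq_mul, ← sub_eq_add_neg]
    linarith [hfc y z, convexEnvelope_le hk hkf (y + z), convexEnvelope_le hk hkf (y - z)]

lemma secondDiffLE_mul_norm_sq (c : ℝ) : SecondDiffLE (2 * c) fun x : E => c * ‖x‖ ^ 2 :=
  fun x z => by linear_combination c * parallelogram_law_with_norm ℝ x z

/-- `f` is semiconvex with constant `c`: it becomes convex after adding `c‖·‖²`. -/
def Semiconvex (c : ℝ) (f : E → ℝ) : Prop :=
  ConvexOn ℝ univ fun x => f x + c * ‖x‖ ^ 2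

lemma Semiconvex.add (hf : Semiconvex b f) (hg : Semiconvex c g) :
    Semiconvex (b + c) fun x => f x + g x := by
  simpa only [Semiconvex, Pi.add_def, add_mul, add_add_add_comm] using ConvexOn.add hf hg

lemma Semiconvex.continuous [FiniteDimensional ℝ E] (hf : Semiconvex c f) : Continuous f := by
  have hsq : Continuous fun x : E => c * ‖x‖ ^ 2 := by fun_prop
  exact (hf.locallyLipschitz.continuous.sub hsq).congr fun x => add_sub_cancel_right _ _

lemma isC11_mul_norm_sq (c : ℝ) : IsC11 fun x : E => c * ‖x‖ ^ 2 := by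
  have hderiv (x : E) := (hasStrictFDerivAt_norm_sq x).hasFDerivAt.const_mul c
  refine ⟨fun x => (hderiv x).differentiableAt, ‖c • 2 • innerSL ℝ (E := E)‖₊, ?_⟩
  rw [funext fun x => (hderiv x).fderiv]
  exact (c • 2 • innerSL ℝ (E := E)).lipschitz

lemma exists_isC11_between [FiniteDimensional ℝ E] (hbc : 0 ≤ b + c) (hP : Semiconvex b P)
    (hQ : Semiconvex c fun x => -Q x) (hPQ : ∀ x, P x ≤ Q x) :
    ∃ φ, IsC11 φ ∧ (∀ x, P x ≤ φ x) ∧ ∀ x, φ x ≤ Q x := by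
  have hle (x : E) : P x + b * ‖x‖ ^ 2 ≤ Q x + b * ‖x‖ ^ 2 := by gcongr; exact hPQ x
  have hQdiff : SecondDiffLE (2 * (b + c)) fun x => Q x + b * ‖x‖ ^ 2 := by
    convert (secondDiffLE_zero_of_concaveOn (ConvexOn.neg hQ)).add
      (secondDiffLE_mul_norm_sq (b + c)) using 1
    · ring
    · ext x
      simp only [Pi.neg_apply]
      ring
  refine ⟨fun x => convexEnvelope (fun x => Q x + b * ‖x‖ ^ 2) x - b * ‖x‖ ^ 2,
    (isC11_of_convexOn_of_secondDiffLE (convexOn_convexEnvelope hP hle) (by positivity)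
      (secondDiffLE_convexEnvelope hQdiff hP hle)).sub (isC11_mul_norm_sq b),
    fun x => ?_, fun x => ?_⟩
  · linarith [le_convexEnvelope hP hle x]
  · linarith [convexEnvelope_le hP hle x]

end Interposition

section Supergradients

variable {E : Type*} [NormedAddCommGroup E] [NormedSpace ℝ E] {w ψ : E → ℝ} {p : E →L[ℝ] ℝ} {x : E}

/-- `p` is a supergradient of `w` at `x`: an affine function of slope `p` touches `w` from above at
`x`. -/
def IsSupergradientAt (w : E → ℝ) (p : E →L[ℝ] ℝ) (x : E) : Prop :=
  ∀ y, w y ≤ w x + p (y - x)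

lemma IsSupergradientAt.fderiv_eq (h : IsSupergradientAt ψ p x) (hψ : DifferentiableAt ℝ ψ x) :
    fderiv ℝ ψ x = p := by
  have hmax : IsLocalMax (fun y => ψ y - p y) x := .of_forall fun y => by
    have := h y
    rw [map_sub] at this
    linarith
  exact sub_eq_zero.mp (hmax.hasFDerivAt_eq_zero (hψ.hasFDerivAt.sub p.hasFDerivAt))

/-- The concave envelope of `w`, the least concave function above `w`. It is a junk value when `w`
has no concave majorant. -/
noncomputable def concaveEnvelope (w : E → ℝ) (x : E) : ℝ :=
  -convexEnvelope (fun y => -w y) x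

lemma convexOn_neg_affine :
    ConvexOn ℝ univ fun y => -p y + (p x - w x) :=
  ((-p).toLinearMap.convexOn convex_univ).add_const _

lemma IsSupergradientAt.neg_affine_le (h : IsSupergradientAt w p x) (y : E) :
    -p y + (p x - w x) ≤ -w y := by
  have := h y
  rw [map_sub] at this
  linarith

lemma IsSupergradientAt.le_concaveEnvelope (h : IsSupergradientAt w p x) (y : E) :
    w y ≤ concaveEnvelope w y :=
  le_neg_of_le_neg (convexEnvelope_le convexOn_neg_affine h.neg_affine_le y)

lemma IsSupergradientAt.concaveEnvelope_le (h : IsSupergradientAt w p x) (y : E) :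
    concaveEnvelope w y ≤ w x + p (y - x) := by
  have := le_convexEnvelope convexOn_neg_affine h.neg_affine_le y
  rw [concaveEnvelope, map_sub]
  linarith

end Supergradients

section Contact

variable {E : Type*} [NormedAddCommGroup E] [InnerProductSpace ℝ E]
  {w U W : E → ℝ} {b c r : ℝ} {p : E →L[ℝ] ℝ} {x : E}

lemma IsSupergradientAt.semiconvex_neg_concaveEnvelope (h : IsSupergradientAt w p x) :
    Semiconvex 0 fun y => -concaveEnvelope w y := by
  simpa only [Semiconvex, zero_mul, add_zero, concaveEnvelope, neg_neg] using
    convexOn_convexEnvelope convexOn_neg_affine h.neg_affine_le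

variable [FiniteDimensional ℝ E]

/- The supergradients of `w` are derivatives of any `C^{1,1}` function between `w` and its concave
envelope. Such a derivative is a Lipschitz map, hence it cannot map a null set onto a ball. -/
lemma exists_isSupergradientAt_notMem_of_null [MeasurableSpace E] [BorelSpace E] {N : Set E}
    (hN : μH[Module.finrank ℝ E] N = 0) (hc : 0 ≤ c) (hw : Semiconvex c w) (hr : 0 < r)
    (htouch : ∀ p : E →L[ℝ] ℝ, ‖p‖ ≤ r → ∃ x, IsSupergradientAt w p x) :
    ∃ p : E →L[ℝ] ℝ, ‖p‖ ≤ r ∧ ∃ x ∉ N, IsSupergradientAt w p x := by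
  by_contra! hcover
  obtain ⟨x₀, h₀⟩ := htouch 0 (norm_zero.trans_le hr.le)
  obtain ⟨ψ, ⟨hψ, K, hK⟩, hwψ, hψΓ⟩ :=
    exists_isC11_between (hc.trans_eq (add_zero c).symm) hw
      h₀.semiconvex_neg_concaveEnvelope h₀.le_concaveEnvelope
  have hball : closedBall (0 : E →L[ℝ] ℝ) r ⊆ fderiv ℝ ψ '' N := fun p hp => by
    obtain ⟨x, hx⟩ := htouch p (mem_closedBall_zero_iff.mp hp)
    refine ⟨x, by_contra fun hxN => hcover p (mem_closedBall_zero_iff.mp hp) x hxN hx, ?_⟩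
    refine IsSupergradientAt.fderiv_eq (fun y => ?_) (hψ x)
    linarith [hwψ x, hψΓ y, hx.concaveEnvelope_le y]
  have himage : μH[Module.finrank ℝ E] (fderiv ℝ ψ '' N) = 0 :=
    le_zero_iff.mp <| (hK.hausdorffMeasure_image_le (Nat.cast_nonneg _) N).trans_eq <| by
      rw [hN, mul_zero]
  have hfinrank : Module.finrank ℝ (E →L[ℝ] ℝ) = Module.finrank ℝ E :=
    LinearMap.toContinuousLinearMap.finrank_eq.symm.trans Subspace.dual_finrank_eq
  rw [← hfinrank] at himage
  exact (measure_closedBall_pos _ 0 hr).ne' (measure_mono_null hball himage)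

/- Let `φ` be a `C^{1,1}` function between `U` and `Γ - W`, where `Γ` is the concave envelope of
`U + W`. At a point of contact, `U` is touched by `φ`, and `W` by an affine function minus `φ`. -/
lemma exists_isC11_touching (hbc : 0 ≤ b + c) (hU : Semiconvex b U) (hW : Semiconvex c W)
    (h : ∃ p x, IsSupergradientAt (fun y => U y + W y) p x) :
    ∃ φ, IsC11 φ ∧ ∀ p x, IsSupergradientAt (fun y => U y + W y) p x →
      (∀ y, U y - U x ≤ φ y - φ x) ∧ ∀ y, W y - W x ≤ φ x - φ y + p (y - x) := by
  obtain ⟨p₀, x₀, h₀⟩ := h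
  have hΓW : Semiconvex c fun y => -(concaveEnvelope (fun y => U y + W y) y - W y) := by
    simpa only [zero_add, neg_sub', sub_neg_eq_add] using h₀.semiconvex_neg_concaveEnvelope.add hW
  obtain ⟨φ, hφ, hUφ, hφΓ⟩ := exists_isC11_between hbc hU hΓW
    fun y => le_sub_iff_add_le.mpr (h₀.le_concaveEnvelope y)
  refine ⟨φ, hφ, fun p x hx => ?_⟩
  have contact : φ x ≤ U x := by
    have := hx.concaveEnvelope_le x
    rw [sub_self, map_zero] at this
    linarith [hφΓ x]
  refine ⟨fun y => ?_, fun y => ?_⟩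
  · linarith [hUφ y]
  · linarith [hφΓ y, hx.concaveEnvelope_le y, hUφ x]

end Contact

section Superjets

variable {E : Type*} [NormedAddCommGroup E] [NormedSpace ℝ E] {φ u w : E → ℝ}
  {L ℓ : E →L[ℝ] ℝ} {M : E →L[ℝ] E →L[ℝ] ℝ} {s : Set E} {x ξ : E}

/-- `(L, M)` belongs to the second-order superjet of `u` at `x` within `s`: up to `o(‖y - x‖²)`,
the quadratic polynomial with first derivative `L` and symmetric second derivative `M` bounds `u`
from above. -/
structure HasSuperjetWithinAt (u : E → ℝ) (L : E →L[ℝ] ℝ) (M : E →L[ℝ] E →L[ℝ] ℝ) (s : Set E)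
    (x : E) : Prop where
  symm : ∀ v w, M v w = M w v
  le : ∀ η > 0, ∀ᶠ y in 𝓝[s] x,
    u y ≤ u x + L (y - x) + 1 / 2 * M (y - x) (y - x) + η * ‖y - x‖ ^ 2

lemma hasFDerivAt_half_quadratic (hM : ∀ v w, M v w = M w v) (x y : E) :
    HasFDerivAt (fun y => 1 / 2 * M (y - x) (y - x)) (M (y - x)) y := by
  have hsub : HasFDerivAt (fun y => y - x) (ContinuousLinearMap.id ℝ E) y :=
    (hasFDerivAt_id y).sub_const x
  have hMsub : HasFDerivAt (fun y => M (y - x)) M y := M.hasFDerivAt.comp y hsub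
  refine ((hMsub.clm_apply hsub).const_mul (1 / 2)).congr_fderiv ?_
  ext v
  simp only [add_apply, smul_apply, ContinuousLinearMap.comp_apply, ContinuousLinearMap.id_apply,
    ContinuousLinearMap.flip_apply, smul_eq_mul, hM v]
  ring

lemma isLittleO_taylor_two (hφ : Differentiable ℝ φ) (hM : HasFDerivAt (fderiv ℝ φ) M x) :
    (fun y => φ y - φ x - fderiv ℝ φ x (y - x) - 1 / 2 * M (y - x) (y - x)) =o[𝓝 x]
      fun y => ‖y - x‖ ^ 2 := by
  have hsymm := second_derivative_symmetric (fun y => (hφ y).hasFDerivAt) hM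
  refine Asymptotics.isLittleO_iff.mpr fun η hη => ?_
  obtain ⟨δ, hδ, hball⟩ :=
    eventually_nhds_iff_ball.mp ((hasFDerivAt_iff_isLittleO.mp hM).bound hη)
  refine eventually_nhds_iff_ball.mpr ⟨δ, hδ, fun y hy => ?_⟩
  have hderiv (z : E) : HasFDerivAt
      (fun z => φ z - φ x - fderiv ℝ φ x (z - x) - 1 / 2 * M (z - x) (z - x))
      (fderiv ℝ φ z - fderiv ℝ φ x - M (z - x)) z := by
    have hlinear : HasFDerivAt (fun z => fderiv ℝ φ x (z - x)) (fderiv ℝ φ x) z :=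
      (fderiv ℝ φ x).hasFDerivAt.comp z ((hasFDerivAt_id z).sub_const x)
    exact (((hφ z).hasFDerivAt.sub_const _).sub hlinear).sub (hasFDerivAt_half_quadratic hsymm x z)
  have hbound : ∀ z ∈ closedBall x ‖y - x‖,
      ‖fderiv ℝ φ z - fderiv ℝ φ x - M (z - x)‖ ≤ η * ‖y - x‖ := fun z hz => by
    rw [mem_closedBall, dist_eq_norm] at hz
    rw [mem_ball, dist_eq_norm] at hy
    refine (hball z (mem_ball_iff_norm.mpr (hz.trans_lt hy))).trans ?_
    gcongr
  have := (convex_closedBall x ‖y - x‖).norm_image_sub_le_of_norm_hasFDerivWithin_le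
    (fun z _ => (hderiv z).hasFDerivWithinAt) hbound (mem_closedBall_self (norm_nonneg _))
    (mem_closedBall_iff_norm.mpr le_rfl)
  simpa only [sub_self, map_zero, mul_zero, sub_zero, norm_pow, norm_norm, mul_assoc, ← sq]
    using this

lemma hasSuperjetWithinAt_of_hasFDerivAt_fderiv (hφ : Differentiable ℝ φ)
    (hM : HasFDerivAt (fderiv ℝ φ) M x) : HasSuperjetWithinAt φ (fderiv ℝ φ x) M univ x where
  symm := second_derivative_symmetric (fun y => (hφ y).hasFDerivAt) hM
  le η hη := by
    rw [nhdsWithin_univ]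
    filter_upwards [(isLittleO_taylor_two hφ hM).bound hη] with y hy
    rw [norm_pow, norm_norm] at hy
    linarith [le_of_abs_le hy]

lemma HasSuperjetWithinAt.of_translate_le (hu : HasSuperjetWithinAt u L M univ x)
    (hw : ∀ ζ ∈ s, w ζ - w ξ ≤ u (x + (ζ - ξ)) - u x + ℓ (ζ - ξ)) :
    HasSuperjetWithinAt w (L + ℓ) M s ξ where
  symm := hu.symm
  le η hη := by
    have htranslate : Tendsto (fun ζ => x + (ζ - ξ)) (𝓝 ξ) (𝓝 x) := by
      refine Continuous.tendsto' (by fun_prop) ξ x ?_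
      rw [sub_self, add_zero]
    have hle := htranslate.eventually (nhdsWithin_univ x ▸ hu.le η hη)
    filter_upwards [nhdsWithin_le_nhds hle, self_mem_nhdsWithin] with ζ hζ hζs
    rw [add_sub_cancel_left] at hζ
    rw [add_apply]
    linarith [hw ζ hζs]

end Superjets

section CommonJets

variable {E : Type*} [NormedAddCommGroup E] [InnerProductSpace ℝ E]
  {u U W : E → ℝ} {b c r δ : ℝ} {L : E →L[ℝ] ℝ} {M : E →L[ℝ] E →L[ℝ] ℝ} {s : Set E} {x : E}

/-- The inner product as a real bilinear form: `innerSL ℝ` without its formal conjugation. -/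
noncomputable def innerBilin (E : Type*) [NormedAddCommGroup E] [InnerProductSpace ℝ E] :
    E →L[ℝ] E →L[ℝ] ℝ :=
  innerSL ℝ

lemma innerBilin_apply (v w : E) : innerBilin E v w = inner ℝ v w := rfl

lemma HasSuperjetWithinAt.of_add_mul_norm_sq
    (h : HasSuperjetWithinAt (fun y => u y + δ / 2 * ‖y‖ ^ 2) L M s x) :
    HasSuperjetWithinAt u (L - δ • innerBilin E x) (M - δ • innerBilin E) s x where
  symm v w := by
    simp only [sub_apply, smul_apply, innerBilin_apply, h.symm v, real_inner_comm]
  le η hη := by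
    filter_upwards [h.le η hη] with y hy
    have expand : ‖y‖ ^ 2 = ‖x‖ ^ 2 + 2 * inner ℝ x (y - x) + ‖y - x‖ ^ 2 := by
      rw [← norm_add_sq_real, add_sub_cancel]
    simp only [sub_apply, smul_apply, innerBilin_apply, smul_eq_mul, real_inner_self_eq_norm_sq]
    rw [expand] at hy
    linarith

lemma exists_common_jet [FiniteDimensional ℝ E] (hbc : 0 ≤ b + c) (hU : Semiconvex b U)
    (hW : Semiconvex c W) (hr : 0 < r)
    (htouch : ∀ p : E →L[ℝ] ℝ, ‖p‖ ≤ r → ∃ x, IsSupergradientAt (fun y => U y + W y) p x) :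
    ∃ p : E →L[ℝ] ℝ, ‖p‖ ≤ r ∧ ∃ x, IsSupergradientAt (fun y => U y + W y) p x ∧
      ∃ L L' M, HasSuperjetWithinAt U L M univ x ∧ HasSuperjetWithinAt W L' (-M) univ x := by
  borelize E
  obtain ⟨φ, ⟨hφ, K, hK⟩, hcontact⟩ :=
    exists_isC11_touching hbc hU hW ⟨0, htouch 0 (norm_zero.trans_le hr.le)⟩
  obtain ⟨p, hp, x, hx, htouch_x⟩ := exists_isSupergradientAt_notMem_of_null
    (N := {x | ¬DifferentiableAt ℝ (fderiv ℝ φ) x}) hK.ae_differentiableAt hbc (hU.add hW) hr htouch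
  have hM := (not_not.mp hx).hasFDerivAt
  have hnegM : HasFDerivAt (fderiv ℝ fun y => -φ y) (-fderiv ℝ (fderiv ℝ φ) x) x := by
    rw [show (fderiv ℝ fun y => -φ y) = fun y => -fderiv ℝ φ y from funext fun y => fderiv_fun_neg]
    exact hM.neg
  have hU_le (y : E) (_ : y ∈ univ) :
      U y - U x ≤ φ (x + (y - x)) - φ x + (0 : E →L[ℝ] ℝ) (y - x) := by
    rw [add_sub_cancel, zero_apply, add_zero]
    exact (hcontact p x htouch_x).1 y
  have hW_le (y : E) (_ : y ∈ univ) : W y - W x ≤ -φ (x + (y - x)) - -φ x + p (y - x) := by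
    rw [add_sub_cancel, neg_sub_neg]
    exact (hcontact p x htouch_x).2 y
  exact ⟨p, hp, x, htouch_x, _, _, _,
    (hasSuperjetWithinAt_of_hasFDerivAt_fderiv hφ hM).of_translate_le hU_le,
    (hasSuperjetWithinAt_of_hasFDerivAt_fderiv hφ.neg hnegM).of_translate_le hW_le⟩

end CommonJets

section SupConvolution

variable {E : Type*} [NormedAddCommGroup E] {K : Set E} {g : E → ℝ} {a c : ℝ} {x ξ : E}

/-- The quadratic sup-convolution over `K` of a function `g`, a semiconvex regularization of `g`.
The parameter `c` is the strength of the penalization, written `1 / ε` or `1 / (2ε)` elsewhere. -/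
noncomputable def supConv (K : Set E) (g : E → ℝ) (c : ℝ) (x : E) : ℝ :=
  ⨆ ξ : K, (g ξ - c * ‖x - ξ‖ ^ 2)

lemma upperSemicontinuousOn_sub_mul_norm_sub_sq (hg : UpperSemicontinuousOn g K) (c : ℝ) (x : E) :
    UpperSemicontinuousOn (fun ξ => g ξ - c * ‖x - ξ‖ ^ 2) K := by
  have hcont : Continuous fun ξ : E => -(c * ‖x - ξ‖ ^ 2) := by fun_prop
  simpa only [sub_eq_add_neg] using hg.add hcont.continuousOn.upperSemicontinuousOn

lemma bddAbove_range_sub_mul_norm_sub_sq (hK : IsCompact K) (hg : UpperSemicontinuousOn g K)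
    (c : ℝ) (x : E) : BddAbove (range fun ξ : K => g ξ - c * ‖x - ξ‖ ^ 2) := by
  have := (upperSemicontinuousOn_sub_mul_norm_sub_sq hg c x).bddAbove_of_isCompact hK
  rwa [image_eq_range] at this

lemma le_supConv (hK : IsCompact K) (hg : UpperSemicontinuousOn g K) (hξ : ξ ∈ K) (c : ℝ) (x : E) :
    g ξ - c * ‖x - ξ‖ ^ 2 ≤ supConv K g c x :=
  le_ciSup (bddAbove_range_sub_mul_norm_sub_sq hK hg c x) ⟨ξ, hξ⟩

lemma exists_supConv_eq (hK : IsCompact K) (hne : K.Nonempty) (hg : UpperSemicontinuousOn g K)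
    (c : ℝ) (x : E) : ∃ ξ ∈ K, supConv K g c x = g ξ - c * ‖x - ξ‖ ^ 2 := by
  have := hne.to_subtype
  obtain ⟨ξ, hξ, hmax⟩ :=
    (upperSemicontinuousOn_sub_mul_norm_sub_sq hg c x).exists_isMaxOn hne hK
  exact ⟨ξ, hξ, le_antisymm (ciSup_le fun ζ => hmax ζ.2) (le_supConv hK hg hξ c x)⟩

lemma exists_supConv_le_sub_mul_norm (hK : IsCompact K) (hne : K.Nonempty)
    (hg : UpperSemicontinuousOn g K) (hc : 0 < c) (ha : 0 ≤ a) :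
    ∃ C, ∀ x, supConv K g c x ≤ C - a * ‖x‖ := by
  have := hne.to_subtype
  obtain ⟨A, hA⟩ := hg.bddAbove_of_isCompact hK
  obtain ⟨R, hR⟩ := hK.isBounded.exists_norm_le
  refine ⟨A + a * R + a ^ 2 / (4 * c), fun x => ciSup_le fun ⟨ξ, hξ⟩ => ?_⟩
  have hgξ : g ξ ≤ A := hA (mem_image_of_mem g hξ)
  have hx : a * ‖x‖ ≤ a * (‖x - ξ‖ + R) := by
    gcongr
    linarith [norm_sub_norm_le x ξ, hR ξ hξ]
  have young : a * ‖x - ξ‖ ≤ c * ‖x - ξ‖ ^ 2 + a ^ 2 / (4 * c) := by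
    have : c * ‖x - ξ‖ ^ 2 + a ^ 2 / (4 * c) - a * ‖x - ξ‖ = c * (‖x - ξ‖ - a / (2 * c)) ^ 2 := by
      field_simp
      ring
    linarith [mul_nonneg hc.le (sq_nonneg (‖x - ξ‖ - a / (2 * c)))]
  linarith

variable [NormedSpace ℝ E]

lemma hasSuperjetWithinAt_of_supConv {L : E →L[ℝ] ℝ} {M : E →L[ℝ] E →L[ℝ] ℝ} (hK : IsCompact K)
    (hg : UpperSemicontinuousOn g K) (hx : supConv K g c x = g ξ - c * ‖x - ξ‖ ^ 2)
    (h : HasSuperjetWithinAt (supConv K g c) L M univ x) : HasSuperjetWithinAt g L M K ξ := by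
  rw [← add_zero L]
  refine h.of_translate_le fun ζ hζ => ?_
  have := le_supConv hK hg hζ c (x + (ζ - ξ))
  rw [show x + (ζ - ξ) - ζ = x - ξ by abel] at this
  rw [zero_apply]
  linarith

lemma exists_isSupergradientAt [FiniteDimensional ℝ E] {w : E → ℝ} {p : E →L[ℝ] ℝ} {C : ℝ}
    (hw : Continuous w) (hwC : ∀ x, w x ≤ C - a * ‖x‖) (hp : ‖p‖ < a) :
    ∃ x, IsSupergradientAt w p x := by
  have hbound (x : E) : w x - p x ≤ C - (a - ‖p‖) * ‖x‖ := by
    linarith [hwC x, neg_le_of_abs_le (p.le_opNorm x)]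
  have htendsto : Tendsto (fun x => w x - p x) (cocompact E) atBot := by
    refine tendsto_atBot_mono hbound (tendsto_atBot_add_const_left _ C ?_)
    exact tendsto_neg_atTop_atBot.comp
      (tendsto_norm_cocompact_atTop.const_mul_atTop (sub_pos.mpr hp))
  obtain ⟨x, hx⟩ := (hw.sub p.continuous).exists_forall_ge htendsto
  refine ⟨x, fun y => ?_⟩
  have : w y - p y ≤ w x - p x := hx y
  rw [map_sub]
  linarith

end SupConvolution

section SupConvolutionSemiconvexity

variable {E : Type*} [NormedAddCommGroup E] [InnerProductSpace ℝ E] {K : Set E} {g : E → ℝ}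

lemma semiconvex_supConv (hK : IsCompact K) (hne : K.Nonempty) (hg : UpperSemicontinuousOn g K)
    (c : ℝ) : Semiconvex c (supConv K g c) := by
  have := hne.to_subtype
  have hadd (x : E) : supConv K g c x + c * ‖x‖ ^ 2 =
      ⨆ ξ : K, (g ξ - c * ‖x - ξ‖ ^ 2 + c * ‖x‖ ^ 2) :=
    ciSup_add (bddAbove_range_sub_mul_norm_sub_sq hK hg c x) _
  have haffine (ξ : K) :
      (fun x : E => g ξ - c * ‖x - ξ‖ ^ 2 + c * ‖x‖ ^ 2) =
        fun x => ((2 * c) • innerBilin E ξ) x + (g ξ - c * ‖(ξ : E)‖ ^ 2) := by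
    ext x
    rw [norm_sub_sq_real, real_inner_comm, smul_apply, innerBilin_apply, smul_eq_mul]
    ring
  simp only [Semiconvex, hadd]
  refine convexOn_iSup (fun ξ => ?_) fun x => ?_
  · rw [haffine]
    exact (((2 * c) • innerBilin E ξ).toLinearMap.convexOn convex_univ).add_const _
  · obtain ⟨A, hA⟩ := bddAbove_range_sub_mul_norm_sub_sq hK hg c x
    exact ⟨A + c * ‖x‖ ^ 2, by rintro _ ⟨ξ, rfl⟩; exact add_le_add_left (hA (mem_range_self ξ)) _⟩

end SupConvolutionSemiconvexity

section Localization

lemma exists_forall_dist_le_imp_mem {X : Type*} [MetricSpace X] {K : Set X} {g h : X → ℝ} {θ : ℝ}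
    {s : Set (X × X)} (hK : IsCompact K) (hg : UpperSemicontinuousOn g K)
    (hh : UpperSemicontinuousOn h K) (hs : IsOpen s)
    (hdiag : ∀ x ∈ K, θ ≤ g x + h x → (x, x) ∈ s) :
    ∃ ρ > 0, ∀ ξ ∈ K, ∀ ζ ∈ K, dist ξ ζ ≤ ρ → θ ≤ g ξ + h ζ → (ξ, ζ) ∈ s := by
  have husc : UpperSemicontinuousOn (fun q : X × X => g q.1 + h q.2) (K ×ˢ K) :=
    (hg.comp continuousOn_fst fun _ hq => hq.1).add (hh.comp continuousOn_snd fun _ hq => hq.2)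
  have hcompact := (husc.isCompact_inter_preimage_Ici (hK.prod hK) θ).diff hs
  have hdist : ∀ q ∈ (K ×ˢ K ∩ (fun q : X × X => g q.1 + h q.2) ⁻¹' Ici θ) \ s,
      0 < dist q.1 q.2 := by
    rintro ⟨ξ, ζ⟩ ⟨⟨⟨hξ, -⟩, hθ⟩, hqs⟩
    refine dist_pos.mpr ?_
    rintro (rfl : ξ = ζ)
    exact hqs (hdiag ξ hξ hθ)
  obtain ⟨ρ, hρ, hle⟩ := hcompact.exists_forall_le' continuous_dist.continuousOn hdist
  refine ⟨ρ / 2, half_pos hρ, fun ξ hξ ζ hζ hξζ hθ => by_contra fun hqs => ?_⟩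
  linarith [hle (ξ, ζ) ⟨⟨⟨hξ, hζ⟩, hθ⟩, hqs⟩]

lemma dist_le_of_norm_sub_sq_add_norm_sub_sq_le {E : Type*} [SeminormedAddCommGroup E] {ρ : ℝ}
    {x ξ ζ : E} (hρ : 0 ≤ ρ) (h : ‖x - ξ‖ ^ 2 + ‖x - ζ‖ ^ 2 ≤ ρ ^ 2 / 2) : dist ξ ζ ≤ ρ := by
  have htriangle : dist ξ ζ ≤ ‖x - ξ‖ + ‖x - ζ‖ := by
    simpa only [dist_eq_norm'] using dist_triangle_right ξ ζ x
  refine htriangle.trans (le_of_sq_le_sq ?_ hρ)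
  linarith [add_sq_le (a := ‖x - ξ‖) (b := ‖x - ζ‖)]

lemma exists_penalization {E : Type*} [NormedAddCommGroup E] [NormedSpace ℝ E] {K : Set E}
    {g h : E → ℝ} {θ ρ A : ℝ} {x₁ : E} (hK : Bornology.IsBounded K)
    (hA : ∀ ξ ∈ K, ∀ ζ ∈ K, g ξ + h ζ ≤ A) (hx₁ : x₁ ∈ K) (hθ : θ < g x₁ + h x₁) (hρ : 0 < ρ) :
    ∃ c > 0, ∃ r > 0, ∀ p : E →L[ℝ] ℝ, ‖p‖ ≤ r → ∀ x, ∀ ξ ∈ K, ∀ ζ ∈ K,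
      g x₁ + h x₁ - p x₁ ≤ g ξ - c * ‖x - ξ‖ ^ 2 + (h ζ - c * ‖x - ζ‖ ^ 2) - p x →
        dist ξ ζ ≤ ρ ∧ θ ≤ g ξ + h ζ := by
  obtain ⟨R, hR⟩ := hK.exists_norm_le
  have hR₀ : 0 ≤ R := (norm_nonneg x₁).trans (hR x₁ hx₁)
  set B := A - (g x₁ + h x₁) + 2 * R + 1
  set c := max 1 (4 * B / ρ ^ 2)
  set r := min 1 ((g x₁ + h x₁ - θ) / (2 * R + 1))
  have hc : 1 ≤ c := le_max_left _ _
  have hBρ : 4 * B ≤ c * ρ ^ 2 := (div_le_iff₀ (by positivity)).mp (le_max_right _ _)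
  have hr : r ≤ 1 := min_le_left _ _
  have hr₀ : 0 < r := lt_min one_pos (div_pos (sub_pos.mpr hθ) (by positivity))
  have hrθ : r * (2 * R + 1) ≤ g x₁ + h x₁ - θ :=
    (le_div_iff₀ (by positivity)).mp (min_le_right _ _)
  refine ⟨c, by positivity, r, hr₀, fun p hp x ξ hξ ζ hζ hle => ?_⟩
  have hslope : p x₁ - p x ≤ r * (2 * R + ‖x - ξ‖) := by
    rw [← map_sub]
    refine (le_of_abs_le (p.le_opNorm _)).trans ?_
    gcongr
    rw [show x₁ - x = x₁ - ξ - (x - ξ) by abel]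
    linarith [norm_sub_le (x₁ - ξ) (x - ξ), norm_sub_le x₁ ξ, hR x₁ hx₁, hR ξ hξ]
  have hpenalty : c * (‖x - ξ‖ ^ 2 + ‖x - ζ‖ ^ 2) ≤
      g ξ + h ζ - (g x₁ + h x₁) + r * (2 * R + ‖x - ξ‖) := by linarith
  constructor
  · have hA := hA ξ hξ ζ hζ
    have hr' : r * (2 * R + ‖x - ξ‖) ≤ 2 * R + ‖x - ξ‖ := mul_le_of_le_one_left (by positivity) hr
    have young : ‖x - ξ‖ ≤ c / 2 * ‖x - ξ‖ ^ 2 + 1 / 2 := by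
      nlinarith [sq_nonneg (‖x - ξ‖ - 1), mul_nonneg (sub_nonneg.mpr hc) (sq_nonneg ‖x - ξ‖)]
    have hsum : c / 2 * (‖x - ξ‖ ^ 2 + ‖x - ζ‖ ^ 2) ≤ B := by
      have : 0 ≤ c / 2 * ‖x - ζ‖ ^ 2 := by positivity
      linarith [hpenalty]
    refine dist_le_of_norm_sub_sq_add_norm_sub_sq_le hρ.le (x := x) ?_
    refine le_of_mul_le_mul_left ?_ (one_pos.trans_le hc)
    linarith
  · have hr_sq : r ^ 2 ≤ r := pow_le_of_le_one hr₀.le hr two_ne_zero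
    have young : r * ‖x - ξ‖ ≤ ‖x - ξ‖ ^ 2 + r ^ 2 := by
      nlinarith [sq_nonneg (‖x - ξ‖ - r / 2)]
    have hc_sq : ‖x - ξ‖ ^ 2 ≤ c * ‖x - ξ‖ ^ 2 := le_mul_of_one_le_left (sq_nonneg _) hc
    have : 0 ≤ c * ‖x - ζ‖ ^ 2 := by positivity
    linarith [hpenalty]

end Localization

section Doubling

variable {E : Type*} [NormedAddCommGroup E] [InnerProductSpace ℝ E] [FiniteDimensional ℝ E]
  {K : Set E} {g h : E → ℝ} {θ c r : ℝ} {x₁ : E} {s : Set (E × E)}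

lemma exists_common_jet_supConv (hK : IsCompact K) (hne : K.Nonempty)
    (hg : UpperSemicontinuousOn g K) (hh : UpperSemicontinuousOn h K) (hc : 0 < c) (hr : 0 < r) :
    ∃ p : E →L[ℝ] ℝ, ‖p‖ ≤ r ∧
      ∃ x, IsSupergradientAt (fun y => supConv K g c y + supConv K h c y) p x ∧
        ∃ L L' M, HasSuperjetWithinAt (supConv K g c) L M univ x ∧
          HasSuperjetWithinAt (supConv K h c) L' (-M) univ x := by
  have hU := semiconvex_supConv hK hne hg c
  have hW := semiconvex_supConv hK hne hh c
  refine exists_common_jet (add_nonneg hc.le hc.le) hU hW hr fun p hp => ?_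
  obtain ⟨A, hA⟩ := exists_supConv_le_sub_mul_norm hK hne hg hc hr.le
  obtain ⟨B, hB⟩ := exists_supConv_le_sub_mul_norm hK hne hh hc hr.le
  refine exists_isSupergradientAt (C := A + B) (a := r + r) (hU.continuous.add hW.continuous)
    (fun x => ?_) (by linarith)
  linarith [hA x, hB x]

theorem exists_opposite_superjets (hK : IsCompact K) (hg : UpperSemicontinuousOn g K)
    (hh : UpperSemicontinuousOn h K) (hx₁ : x₁ ∈ K) (hθ : θ < g x₁ + h x₁) (hs : IsOpen s)
    (hdiag : ∀ x ∈ K, θ ≤ g x + h x → (x, x) ∈ s) :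
    ∃ ξ ∈ K, ∃ ζ ∈ K, (ξ, ζ) ∈ s ∧
      ∃ L L' M, HasSuperjetWithinAt g L M K ξ ∧ HasSuperjetWithinAt h L' (-M) K ζ := by
  have hne : K.Nonempty := ⟨x₁, hx₁⟩
  obtain ⟨ρ, hρ, hmem⟩ := exists_forall_dist_le_imp_mem hK hg hh hs hdiag
  obtain ⟨A, hA⟩ := hg.bddAbove_of_isCompact hK
  obtain ⟨B, hB⟩ := hh.bddAbove_of_isCompact hK
  have hAB : ∀ ξ ∈ K, ∀ ζ ∈ K, g ξ + h ζ ≤ A + B := fun ξ hξ ζ hζ =>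
    add_le_add (hA (mem_image_of_mem g hξ)) (hB (mem_image_of_mem h hζ))
  obtain ⟨c, hc, r, hr, hclose⟩ := exists_penalization hK.isBounded hAB hx₁ hθ hρ
  obtain ⟨p, hp, x, hx, L, L', M, hL, hL'⟩ := exists_common_jet_supConv hK hne hg hh hc hr
  obtain ⟨ξ, hξ, hgξ⟩ := exists_supConv_eq hK hne hg c x
  obtain ⟨ζ, hζ, hhζ⟩ := exists_supConv_eq hK hne hh c x
  have hle : g x₁ + h x₁ - p x₁ ≤ g ξ - c * ‖x - ξ‖ ^ 2 + (h ζ - c * ‖x - ζ‖ ^ 2) - p x := by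
    have hsupergradient : _ ≤ _ + _ + _ := hx x₁
    have hg₁ := le_supConv hK hg hx₁ c x₁
    have hh₁ := le_supConv hK hh hx₁ c x₁
    rw [sub_self, norm_zero] at hg₁ hh₁
    rw [hgξ, hhζ, map_sub] at hsupergradient
    linarith
  obtain ⟨hdist, hvalue⟩ := hclose p hp x ξ hξ ζ hζ hle
  exact ⟨ξ, hξ, ζ, hζ, hmem ξ hξ ζ hζ hdist hvalue, L, L', M,
    hasSuperjetWithinAt_of_supConv hK hg hgξ hL, hasSuperjetWithinAt_of_supConv hK hh hhζ hL'⟩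

end Doubling

section Hessians

variable {n : ℕ} {B : En n →L[ℝ] En n →L[ℝ] ℝ}

/-- The Gram matrix of a bilinear form on `ℝⁿ` in the standard basis, so that a second derivative
becomes a Hessian matrix. -/
noncomputable def bilinMatrix (B : En n →L[ℝ] En n →L[ℝ] ℝ) : Matrix (Fin n) (Fin n) ℝ :=
  fun i j => B (EuclideanSpace.single i 1) (EuclideanSpace.single j 1)

lemma isHermitian_bilinMatrix (hB : ∀ v w, B v w = B w v) : (bilinMatrix B).IsHermitian :=
  Matrix.ext fun _ _ => hB _ _

lemma bilinMatrix_neg (B : En n →L[ℝ] En n →L[ℝ] ℝ) : bilinMatrix (-B) = -bilinMatrix B := rfl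

lemma bilinMatrix_innerBilin (n : ℕ) : bilinMatrix (innerBilin (En n)) = 1 := by
  ext i j
  simp [bilinMatrix, innerBilin_apply, EuclideanSpace.inner_single_left, Matrix.one_apply]

lemma bilinMatrix_add_smul_innerBilin (B : En n →L[ℝ] En n →L[ℝ] ℝ) (t : ℝ) :
    bilinMatrix (B + t • innerBilin (En n)) = bilinMatrix B + t • 1 :=
  bilinMatrix_innerBilin n ▸ rfl

lemma bilinMatrix_sub_smul_innerBilin (B : En n →L[ℝ] En n →L[ℝ] ℝ) (t : ℝ) :
    bilinMatrix (B - t • innerBilin (En n)) = bilinMatrix B - t • 1 :=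
  bilinMatrix_innerBilin n ▸ rfl

lemma hess_quadratic (L : En n →L[ℝ] ℝ) (hB : ∀ v w, B v w = B w v) (x : En n) :
    hess (fun y => L y + 1 / 2 * B (y - x) (y - x)) x = bilinMatrix B := by
  have hfderiv : fderiv ℝ (fun y => L y + 1 / 2 * B (y - x) (y - x)) = fun y => L + B (y - x) :=
    funext fun y => (L.hasFDerivAt.add (hasFDerivAt_half_quadratic hB x y)).fderiv
  have hfderiv_two : HasFDerivAt (fun y => L + B (y - x)) B x :=
    (B.hasFDerivAt.comp x ((hasFDerivAt_id x).sub_const x)).const_add L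
  ext i j
  rw [hess, iteratedFDeriv_two_apply, hfderiv, hfderiv_two.fderiv]
  rfl

lemma hess_neg (φ : En n → ℝ) (x : En n) : hess (fun y => -φ y) x = -hess φ x := by
  ext i j
  exact congrArg (· ![EuclideanSpace.single i 1, EuclideanSpace.single j 1])
    (iteratedFDeriv_neg_apply (𝕜 := ℝ) (i := 2) (f := φ) (x := x))

end Hessians

section Viscosity

variable {n : ℕ} {F : Matrix (Fin n) (Fin n) ℝ → ℝ} {Ω s : Set (En n)} {f u v : En n → ℝ}
  {x : En n} {L : En n →L[ℝ] ℝ} {M : En n →L[ℝ] En n →L[ℝ] ℝ} {t : ℝ}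

/-- `u` is a viscosity subsolution of `F(D²u) = f` in `Ω`; for `F = M_a` this is `IsViscSubsol`. -/
def IsViscositySubsolution (F : Matrix (Fin n) (Fin n) ℝ → ℝ) (Ω : Set (En n))
    (f u : En n → ℝ) : Prop :=
  ∀ x ∈ Ω, ∀ φ : En n → ℝ, ContDiff ℝ 2 φ →
    IsLocalMaxOn (fun y => u y - φ y) Ω x → f x ≤ F (hess φ x)

/-- `v` is a viscosity supersolution of `F(D²v) = f` in `Ω`; for `F = M_a` this is
`IsViscSupersol`. -/
def IsViscositySupersolution (F : Matrix (Fin n) (Fin n) ℝ → ℝ) (Ω : Set (En n))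
    (f v : En n → ℝ) : Prop :=
  ∀ x ∈ Ω, ∀ φ : En n → ℝ, ContDiff ℝ 2 φ →
    IsLocalMinOn (fun y => v y - φ y) Ω x → F (hess φ x) ≤ f x

lemma IsViscositySupersolution.neg (h : IsViscositySupersolution F Ω f v) :
    IsViscositySubsolution (fun X => -F (-X)) Ω (fun x => -f x) fun x => -v x := by
  intro x hx φ hφ hmax
  have hmin : IsLocalMinOn (fun y => v y - -φ y) Ω x := by
    simpa only [neg_sub, sub_neg_eq_add, add_comm] using hmax.neg
  rw [neg_le_neg_iff, ← hess_neg]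
  exact h x hx _ hφ.neg hmin

lemma IsViscositySubsolution.le_of_hasSuperjetWithinAt (h : IsViscositySubsolution F Ω f u)
    (hs : Ω ⊆ s) (hx : x ∈ Ω) (hu : HasSuperjetWithinAt u L M s x) (ht : 0 < t) :
    f x ≤ F (bilinMatrix M + t • 1) := by
  have hsymm (v w : En n) :
      (M + t • innerBilin (En n)) v w = (M + t • innerBilin (En n)) w v := by
    simp only [add_apply, smul_apply, innerBilin_apply, hu.symm v, real_inner_comm]
  rw [← bilinMatrix_add_smul_innerBilin, ← hess_quadratic L hsymm x]
  refine h x hx _ (by fun_prop) ?_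
  filter_upwards [nhdsWithin_mono x hs (hu.le (t / 2) (half_pos ht))] with y hy
  simp only [sub_self, map_zero, mul_zero, add_zero, add_apply, smul_apply, innerBilin_apply,
    real_inner_self_eq_norm_sq, smul_eq_mul]
  rw [map_sub L] at hy
  linarith

/-- Uniform strict ellipticity of `F` in the direction of the identity matrix only: adding a fixed
positive multiple of the identity to a symmetric matrix raises `F` by an amount bounded below. -/
def IsUniformlyIncreasingAlongOne (F : Matrix (Fin n) (Fin n) ℝ → ℝ) : Prop :=
  ∀ t > (0 : ℝ), ∃ κ > 0, ∀ X : Matrix (Fin n) (Fin n) ℝ, X.IsHermitian → F X + κ ≤ F (X + t • 1)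

lemma ClassAbar.isUniformlyIncreasingAlongOne_Ma {a : Fin n → ℝ} (ha : ClassAbar a) :
    IsUniformlyIncreasingAlongOne (Ma a) := by
  obtain ⟨hnonneg, i, hi⟩ := ha
  have hsum : 0 < ∑ i, a i := Finset.sum_pos' (fun i _ => hnonneg i) ⟨i, Finset.mem_univ i, hi⟩
  exact fun t ht => ⟨t * ∑ i, a i, mul_pos ht hsum, fun X hX => (Ma_add_smul_one a hX t).ge⟩

lemma IsUniformlyIncreasingAlongOne.exists_forall_superjets
    (hF : IsUniformlyIncreasingAlongOne F) (hsub : IsViscositySubsolution F Ω f u)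
    (hsup : IsViscositySupersolution F Ω f v) (hs : Ω ⊆ s) {δ : ℝ} (hδ : 0 < δ) :
    ∃ κ > 0, ∀ ξ ∈ Ω, ∀ ζ ∈ Ω, ∀ L L' M,
      HasSuperjetWithinAt (fun y => u y + δ / 2 * ‖y‖ ^ 2) L M s ξ →
        HasSuperjetWithinAt (fun y => -v y) L' (-M) s ζ → f ξ + κ ≤ f ζ := by
  obtain ⟨κ, hκ, hincr⟩ := hF (δ / 2) (half_pos hδ)
  refine ⟨κ, hκ, fun ξ hξ ζ hζ L L' M hu hv => ?_⟩
  have hjet := hu.of_add_mul_norm_sq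
  have hf_le : f ξ ≤ F (bilinMatrix (M - δ • innerBilin (En n)) + (δ / 4) • 1) :=
    hsub.le_of_hasSuperjetWithinAt hs hξ hjet (by positivity)
  have hle_f : F (-(bilinMatrix (-M) + (δ / 4) • 1)) ≤ f ζ :=
    neg_le_neg_iff.mp (hsup.neg.le_of_hasSuperjetWithinAt hs hζ hv (by positivity))
  have hgap : bilinMatrix (M - δ • innerBilin (En n)) + (δ / 4) • 1 + (δ / 2) • 1 =
      -(bilinMatrix (-M) + (δ / 4) • 1) := by
    rw [bilinMatrix_sub_smul_innerBilin, bilinMatrix_neg]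
    module
  have hherm : (bilinMatrix (M - δ • innerBilin (En n)) + (δ / 4) • 1).IsHermitian :=
    (isHermitian_bilinMatrix hjet.symm).add (Matrix.isHermitian_one.smul (.all _))
  calc f ξ + κ ≤ F (bilinMatrix (M - δ • innerBilin (En n)) + (δ / 4) • 1) + κ := by gcongr
    _ ≤ F (-(bilinMatrix (-M) + (δ / 4) • 1)) := hgap ▸ hincr _ hherm
    _ ≤ f ζ := hle_f

end Viscosity

section Comparison

variable {n : ℕ} {F : Matrix (Fin n) (Fin n) ℝ → ℝ} {Ω : Set (En n)} {f u v : En n → ℝ}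

lemma exists_pos_forall_mul_norm_sq_lt {E : Type*} [SeminormedAddCommGroup E] {K : Set E} {m : ℝ}
    (hK : Bornology.IsBounded K) (hm : 0 < m) : ∃ δ > 0, ∀ x ∈ K, δ * ‖x‖ ^ 2 < m := by
  obtain ⟨R, hR⟩ := hK.exists_norm_le
  refine ⟨m / (R ^ 2 + 1), by positivity, fun x hx => ?_⟩
  rw [div_mul_eq_mul_div, div_lt_iff₀ (by positivity), mul_lt_mul_iff_right₀ hm]
  exact (pow_le_pow_left₀ (norm_nonneg x) (hR x hx) 2).trans_lt (lt_add_one _)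

theorem comparison_principle_general (hF : IsUniformlyIncreasingAlongOne F) (hΩo : IsOpen Ω)
    (hΩb : Bornology.IsBounded Ω) (hf : ContinuousOn f Ω)
    (hu : UpperSemicontinuousOn u (closure Ω)) (hv : LowerSemicontinuousOn v (closure Ω))
    (hsub : IsViscositySubsolution F Ω f u) (hsup : IsViscositySupersolution F Ω f v)
    (hbd : ∀ x ∈ frontier Ω, u x ≤ v x) :
    ∀ x ∈ Ω, u x ≤ v x := by
  intro x₁ hx₁
  by_contra! hlt
  obtain ⟨δ, hδ, hsmall⟩ := exists_pos_forall_mul_norm_sq_lt hΩb.closure (sub_pos.mpr hlt)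
  obtain ⟨κ, hκ, hjets⟩ := hF.exists_forall_superjets hsub hsup subset_closure hδ
  have hopen : IsOpen {q : En n × En n | q ∈ Ω ×ˢ Ω ∧ f q.2 - f q.1 < κ} :=
    ((hf.comp continuousOn_snd fun _ hq => hq.2).sub
      (hf.comp continuousOn_fst fun _ hq => hq.1)).isOpen_inter_preimage (hΩo.prod hΩo) isOpen_Iio
  have hg : UpperSemicontinuousOn (fun x => u x + δ / 2 * ‖x‖ ^ 2) (closure Ω) :=
    hu.add (by fun_prop : Continuous _).continuousOn.upperSemicontinuousOn
  have hinterior : ∀ x ∈ closure Ω,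
      (u x₁ - v x₁) / 2 ≤ u x + δ / 2 * ‖x‖ ^ 2 + -v x → x ∈ Ω := fun x hx hle => by
    by_contra hxΩ
    have := hbd x (hΩo.frontier_eq ▸ ⟨hx, hxΩ⟩)
    linarith [hsmall x hx]
  have hmax : (u x₁ - v x₁) / 2 < u x₁ + δ / 2 * ‖x₁‖ ^ 2 + -v x₁ := by
    have : 0 ≤ δ / 2 * ‖x₁‖ ^ 2 := by positivity
    linarith
  obtain ⟨ξ, -, ζ, -, ⟨⟨hξ, hζ⟩, hfκ⟩, L, L', M, hu_jet, hv_jet⟩ := exists_opposite_superjets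
    hΩb.isCompact_closure hg hv.neg (subset_closure hx₁) hmax hopen fun x hx hle =>
      ⟨⟨hinterior x hx hle, hinterior x hx hle⟩, (sub_self (f x)).trans_lt hκ⟩
  linarith [hjets ξ hξ ζ hζ L L' M hu_jet hv_jet]

end Comparison

/-- **Comparison principle (Theorem 3.1).** Let `Ω ⊆ ℝⁿ` be bounded open, `M_a ∈ 𝒜̄` and
`f` bounded and continuous on `Ω`. If `u` is usc on `Ω̄` and a viscosity subsolution of
`M_a(D²u) = f`, `v` is lsc on `Ω̄` and a viscosity supersolution, and `u ≤ v` on `∂Ω`,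
then `u ≤ v` in `Ω`. -/
theorem comparison_principle (n : ℕ) (a : Fin n → ℝ) (ha : ClassAbar a)
    (Ω : Set (En n)) (hΩo : IsOpen Ω) (hΩb : Bornology.IsBounded Ω)
    (f u v : En n → ℝ)
    (hf : ContinuousOn f Ω) (hfb : ∃ K, ∀ x ∈ Ω, |f x| ≤ K)
    (hu : UpperSemicontinuousOn u (closure Ω))
    (hv : LowerSemicontinuousOn v (closure Ω))
    (hsub : IsViscSubsol a Ω f u) (hsup : IsViscSupersol a Ω f v)
    (hbd : ∀ x ∈ frontier Ω, u x ≤ v x) :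
    ∀ x ∈ Ω, u x ≤ v x :=
  comparison_principle_general ha.isUniformlyIncreasingAlongOne_Ma hΩo hΩb hf hu hv hsub hsup hbd
end
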